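/- arXiv:1809.07667 — 2 statements merged into one kernel-verified Lean document; each statement's English description precedes it below -/
import Mathlib

section
/- The Poincaré polynomial of the graded algebra vsc^∨_{mn}(0,l) equals ∏_{i=0}^{l-1}(1 + t^{n-m-1} + i·t^{n-1}). -/
/-!
Write `A_l` for `VscAlgebra n m l`. The recursion behind the product is that `A_{l+1}` is a free
right `A_l`-module with basis `1`, `η_l`, `ω_{0l}, …, ω_{l-1,l}` (points being numbered from `0`,
so that `l` is the last one); comparing graded pieces, each step multiplies the Poincaré polynomial
by `1 + t^(n-m-1) + l t^(n-1)`.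

The difficulty in a proof from generators and relations is linear independence, that is, to show
that the relations do not collapse `A_{l+1}`. For this, `A_{l+1}` is made to act on the free module
`Md l A_l` of rank `l + 2`. The generators with indices below `l` act by left multiplication on the
coefficients, with the sign that comes from moving them past the basis vector; `η_l` and `ω_{jl}`
act by the formulas which the relations of `A_{l+1}` dictate, namely
`ω_{jl} · ω_{kl} a = (ω_{jl} - ω_{kl}) ω_{kj} a`, `ω_{jl} · η_l a = ω_{jl} η_j a`, and
`η_l · ω_{kl} a = ± ω_{kl} η_k a`. That these operators satisfy all the relations (`extend`) is a
finite check, whose essential point is the mixed Arnold relation `WW_arnold`. This gives the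
representation `rho`.

In the other direction, `psi` multiplies out: `w ⊗ a ↦ w · a`. The same relations, now read in
`A_{l+1}`, show that `psi` intertwines `rho` with left multiplication (`psi_rho`), so
`x ↦ rho x (1 ⊗ 1)` and `psi` are mutually inverse. Both preserve degrees, which yields
`gradedEquiv` and hence the recursion.
-/

open Polynomial

/-- Generators of `vsc^∨_{mn}(0,l)`: the `ω_{ij}` (for `i ≠ j`, degree `n−1`)
and the `η_i` (degree `n−m−1`). -/
abbrev VscGen (l : ℕ) : Type := {p : Fin l × Fin l // p.1 ≠ p.2} ⊕ Fin l

/-- Degrees of the generators: `deg ω_{ij} = n−1`, `deg η_i = n−m−1`. -/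
def vscDeg (n m l : ℕ) : VscGen l → ℕ
  | Sum.inl _ => n - 1
  | Sum.inr _ => n - m - 1

/-- The defining relations of `vsc^∨_{mn}(0,l)`: graded commutativity of the
generators, `ω_{ji} = (−1)^n ω_{ij}`, `ω_{ij}² = 0`, the Arnold relation,
`η_i² = 0`, and `η_i ω_{ij} = η_j ω_{ij}`. -/
inductive VscRel (n m l : ℕ) :
    FreeAlgebra ℝ (VscGen l) → FreeAlgebra ℝ (VscGen l) → Prop
  | comm (g h : VscGen l) :
      VscRel n m l (FreeAlgebra.ι ℝ g * FreeAlgebra.ι ℝ h)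
        (((-1 : ℝ) ^ (vscDeg n m l g * vscDeg n m l h)) •
          (FreeAlgebra.ι ℝ h * FreeAlgebra.ι ℝ g))
  | sym (i j : Fin l) (h : i ≠ j) :
      VscRel n m l (FreeAlgebra.ι ℝ (Sum.inl ⟨(j, i), h.symm⟩))
        (((-1 : ℝ) ^ n) • FreeAlgebra.ι ℝ (Sum.inl ⟨(i, j), h⟩))
  | sq (p : {p : Fin l × Fin l // p.1 ≠ p.2}) :
      VscRel n m l (FreeAlgebra.ι ℝ (Sum.inl p) * FreeAlgebra.ι ℝ (Sum.inl p)) 0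
  | arnold (i j k : Fin l) (hij : i ≠ j) (hjk : j ≠ k) (hki : k ≠ i) :
      VscRel n m l
        (FreeAlgebra.ι ℝ (Sum.inl ⟨(i, j), hij⟩) * FreeAlgebra.ι ℝ (Sum.inl ⟨(j, k), hjk⟩)
          + FreeAlgebra.ι ℝ (Sum.inl ⟨(j, k), hjk⟩) * FreeAlgebra.ι ℝ (Sum.inl ⟨(k, i), hki⟩)
          + FreeAlgebra.ι ℝ (Sum.inl ⟨(k, i), hki⟩) * FreeAlgebra.ι ℝ (Sum.inl ⟨(i, j), hij⟩)) 0
  | etaSq (i : Fin l) :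
      VscRel n m l (FreeAlgebra.ι ℝ (Sum.inr i) * FreeAlgebra.ι ℝ (Sum.inr i)) 0
  | etaOmega (i j : Fin l) (h : i ≠ j) :
      VscRel n m l
        (FreeAlgebra.ι ℝ (Sum.inr i) * FreeAlgebra.ι ℝ (Sum.inl ⟨(i, j), h⟩))
        (FreeAlgebra.ι ℝ (Sum.inr j) * FreeAlgebra.ι ℝ (Sum.inl ⟨(i, j), h⟩))

/-- The algebra `vsc^∨_{mn}(0,l) = e_n^∨(l) ⊗ S(η_1,…,η_l)/(η_i², η_iω_{ij} − η_jω_{ij})`,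
presented by generators and relations. -/
abbrev VscAlgebra (n m l : ℕ) : Type := RingQuot (VscRel n m l)

/-- The degree-`k` graded piece of `vsc^∨_{mn}(0,l)`: the span of products of
generators of total degree `k`. -/
noncomputable def vscGraded (n m l : ℕ) (k : ℕ) : Submodule ℝ (VscAlgebra n m l) :=
  Submodule.span ℝ {x | ∃ w : List (VscGen l), (w.map (vscDeg n m l)).sum = k ∧
    x = (w.map (fun g => RingQuot.mkAlgHom ℝ (VscRel n m l) (FreeAlgebra.ι ℝ g))).prod}

/-! ### Systems of generators and operators on the free module -/

/-- Elements `O i j` and `H i` of a real algebra satisfying the relations of `ω_{ij}` and `η_i`.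
Here `O i i = 0` by convention, so that no side conditions on the indices are needed. The scalar
`s` is the sign `(-1)^n` in `ω_{ji} = (-1)^n ω_{ij}`, `-s` is the sign for commuting two `ω`s, `t`
the one for an `η` and an `ω`, and `u` the one for two `η`s. -/
structure VscSystem (s t u : ℝ) (ι : Type) (B : Type*) [Ring B] [Algebra ℝ B] where
  O : ι → ι → B
  H : ι → B
  O_self : ∀ i, O i i = 0
  O_symm : ∀ i j, O j i = s • O i j
  O_sq : ∀ i j, O i j * O i j = 0
  OO : ∀ i j k l, O i j * O k l = (-s) • (O k l * O i j)
  HO : ∀ i j k, H i * O j k = t • (O j k * H i)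
  HH : ∀ i j, H i * H j = u • (H j * H i)
  H_sq : ∀ i, H i * H i = 0
  HO_eq : ∀ i j, H i * O i j = H j * O i j
  arnold : ∀ i j k, O i j * O j k + O j k * O k i + O k i * O i j = 0

namespace VscSystem

/-- Indices of the basis of the free module: `none` stands for `1`, `some none` for `η_l`, and
`some (some j)` for `ω_{jl}`. -/
abbrev Idx (l : ℕ) : Type := Option (Option (Fin l))

section ext
variable {s t u : ℝ} {l : ℕ} {A : Type*} [Ring A] [Algebra ℝ A]

/-- The free right `A`-module on `Idx l`, of which only the real vector space structure is used. -/
def Md (l : ℕ) (A : Type*) [Ring A] [Algebra ℝ A] : Type _ := Idx l →₀ A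

noncomputable instance : AddCommGroup (Md l A) := inferInstanceAs (AddCommGroup (Idx l →₀ A))

noncomputable instance : Module ℝ (Md l A) := inferInstanceAs (Module ℝ (Idx l →₀ A))

/-- The inclusion `a ↦ w ⊗ a` of the copy of `A` at index `w`. -/
noncomputable def S (w : Idx l) : A →ₗ[ℝ] Md l A :=
  show A →ₗ[ℝ] (Idx l →₀ A) from Finsupp.lsingle w

/-- The coefficient in `A` of the basis vector `w`. -/
noncomputable def coord (w : Idx l) : Md l A →ₗ[ℝ] A :=
  show (Idx l →₀ A) →ₗ[ℝ] A from Finsupp.lapply w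

/-- The linear map out of the free module given by a map on each copy of `A`. -/
noncomputable def dsum {N : Type*} [AddCommGroup N] [Module ℝ N] (f : Idx l → A →ₗ[ℝ] N) :
    Md l A →ₗ[ℝ] N :=
  show (Idx l →₀ A) →ₗ[ℝ] N from Finsupp.lsum ℝ f

lemma dsum_S {N : Type*} [AddCommGroup N] [Module ℝ N] (f : Idx l → A →ₗ[ℝ] N) (w : Idx l) (a : A) :
    dsum f (S w a) = f w a :=
  (Finsupp.lsum_single ℝ f w a)

lemma coord_S_same (w : Idx l) (a : A) : coord w (S w a) = a := Finsupp.single_eq_same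

lemma coord_S_ne {v w : Idx l} (h : v ≠ w) (a : A) : coord v (S w a) = 0 :=
  Finsupp.single_eq_of_ne h

lemma sum_S_coord (x : Md l A) : ∑ w, S w (coord w x) = x :=
  (Finsupp.univ_sum_single x)

lemma md_lext {N : Type*} [AddCommGroup N] [Module ℝ N] {f g : Md l A →ₗ[ℝ] N}
    (h0 : ∀ a, f (S none a) = g (S none a))
    (h1 : ∀ a, f (S (some none) a) = g (S (some none) a))
    (h2 : ∀ k a, f (S (some (some k)) a) = g (S (some (some k)) a)) : f = g := by
  refine LinearMap.ext fun x => ?_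
  rw [← sum_S_coord x, map_sum, map_sum]
  refine Finset.sum_congr rfl fun w _ => ?_
  rcases w with _ | _ | k
  exacts [h0 _, h1 _, h2 k _]

/-- Left multiplication by `x` on the coefficients, twisted by the scalars `c` at `η_l` and `d` at
each `ω_{jl}`: the operator of a generator without the index `l`, when `c` and `d` are the signs
for moving it past these basis vectors. -/
noncomputable def opL (l : ℕ) (c d : ℝ) (x : A) : Module.End ℝ (Md l A) :=
  dsum fun w => match w with
    | none => S none ∘ₗ LinearMap.mulLeft ℝ x
    | some none => c • (S (some none) ∘ₗ LinearMap.mulLeft ℝ x)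
    | some (some k) => d • (S (some (some k)) ∘ₗ LinearMap.mulLeft ℝ x)

/-- The operator of `η_l`; on `ω_{kl}` it uses `η_l ω_{kl} = η_k ω_{kl}`. -/
noncomputable def opE (D : VscSystem s t u (Fin l) A) : Module.End ℝ (Md l A) :=
  dsum fun w => match w with
    | none => S (some none)
    | some none => 0
    | some (some k) => t • (S (some (some k)) ∘ₗ LinearMap.mulLeft ℝ (D.H k))

/-- The operator of `ω_{jl}`; on `η_l` it uses `ω_{jl} η_l = ω_{jl} η_j`, and on `ω_{kl}` the Arnold
relation in the form `ω_{jl} ω_{kl} = (ω_{jl} - ω_{kl}) ω_{kj}`. -/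
noncomputable def opW (D : VscSystem s t u (Fin l) A) (j : Fin l) : Module.End ℝ (Md l A) :=
  dsum fun w => match w with
    | none => S (some (some j))
    | some none => S (some (some j)) ∘ₗ LinearMap.mulLeft ℝ (D.H j)
    | some (some k) => (S (some (some j)) - S (some (some k))) ∘ₗ
        LinearMap.mulLeft ℝ (D.O k j)

@[simp] lemma opL_e (c d : ℝ) (x a : A) : opL l c d x (S none a) = S none (x * a) := by
  simp [opL, dsum_S]
@[simp] lemma opL_h (c d : ℝ) (x a : A) :
    opL l c d x (S (some none) a) = c • S (some none) (x * a) := by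
  simp [opL, dsum_S]
@[simp] lemma opL_w (c d : ℝ) (x a : A) (k) :
    opL l c d x (S (some (some k)) a) = d • S (some (some k)) (x * a) := by
  simp [opL, dsum_S]
@[simp] lemma opE_e (D : VscSystem s t u (Fin l) A) (a : A) :
    opE D (S none a) = S (some none) a := by
  simp [opE, dsum_S]
@[simp] lemma opE_h (D : VscSystem s t u (Fin l) A) (a : A) :
    opE D (S (some none) a) = 0 := by
  simp [opE, dsum_S]
@[simp] lemma opE_w (D : VscSystem s t u (Fin l) A) (a : A) (k) :
    opE D (S (some (some k)) a) = t • S (some (some k)) (D.H k * a) := by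
  simp [opE, dsum_S]
@[simp] lemma opW_e (D : VscSystem s t u (Fin l) A) (j) (a : A) :
    opW D j (S none a) = S (some (some j)) a := by
  simp [opW, dsum_S]
@[simp] lemma opW_h (D : VscSystem s t u (Fin l) A) (j) (a : A) :
    opW D j (S (some none) a) = S (some (some j)) (D.H j * a) := by
  simp [opW, dsum_S]
@[simp] lemma opW_w (D : VscSystem s t u (Fin l) A) (j) (a : A) (k) :
    opW D j (S (some (some k)) a) = S (some (some j)) (D.O k j * a)
      - S (some (some k)) (D.O k j * a) := by
  simp [opW, dsum_S]

lemma md_ext {f g : Module.End ℝ (Md l A)} (h0 : ∀ a, f (S none a) = g (S none a))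
    (h1 : ∀ a, f (S (some none) a) = g (S (some none) a))
    (h2 : ∀ k a, f (S (some (some k)) a) = g (S (some (some k)) a)) : f = g :=
  md_lext h0 h1 h2

section rels
variable (D : VscSystem s t u (Fin l) A)
include D
lemma H_sq' (i a) : D.H i * (D.H i * a) = 0 := by rw [← mul_assoc, D.H_sq, zero_mul]
lemma O_sq' (i j a) : D.O i j * (D.O i j * a) = 0 := by rw [← mul_assoc, D.O_sq, zero_mul]
lemma OO' (i j k r a) : D.O i j * (D.O k r * a) = (-s) • (D.O k r * (D.O i j * a)) := by
  rw [← mul_assoc, D.OO, smul_mul_assoc, mul_assoc]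
lemma HO' (i j k a) : D.H i * (D.O j k * a) = t • (D.O j k * (D.H i * a)) := by
  rw [← mul_assoc, D.HO, smul_mul_assoc, mul_assoc]
lemma HH' (i j a) : D.H i * (D.H j * a) = u • (D.H j * (D.H i * a)) := by
  rw [← mul_assoc, D.HH, smul_mul_assoc, mul_assoc]
lemma HO_eq' (i j a) : D.H i * (D.O i j * a) = D.H j * (D.O i j * a) := by
  rw [← mul_assoc, D.HO_eq, mul_assoc]
lemma OH_eq' (ht : t * t = 1) (i j a) : D.O i j * (D.H i * a) = D.O i j * (D.H j * a) := by
  have h := D.HO_eq' i j a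
  rw [HO', HO'] at h
  simpa [smul_smul, ht] using congrArg (t • ·) h
lemma arnold' (i j k a) : D.O i j * (D.O j k * a) + D.O j k * (D.O k i * a)
    + D.O k i * (D.O i j * a) = 0 := by
  simp only [← mul_assoc, ← add_mul, D.arnold, zero_mul]
/-- The Arnold relation solved for a product of two generators with common second index. -/
lemma arnold_target (hs : s * s = 1) (i j k a) : D.O j i * (D.O k i * a) =
    D.O j i * (D.O k j * a) - D.O k i * (D.O k j * a) := by
  have h := D.arnold' j i k a
  rw [D.O_symm k i, D.OO' k j j i] at h
  simp only [smul_mul_assoc, mul_smul_comm] at h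
  have h2 := congrArg (s • ·) h
  simp only [smul_add, smul_smul, mul_neg, hs, smul_zero] at h2
  rw [← sub_eq_zero]; rw [← h2]; module
end rels

lemma opL_mul (c d c' d' : ℝ) (x y : A) :
    opL l c d x * opL l c' d' y = opL l (c * c') (d * d') (x * y) := by
  apply md_ext <;> intros <;> simp [smul_smul, mul_assoc, mul_comm]

lemma opL_smul (c d r : ℝ) (x : A) : opL l c d (r • x) = r • opL l c d x := by
  apply md_ext <;> intros <;> simp [smul_smul, mul_comm]

lemma opL_add (c d : ℝ) (x y : A) : opL l c d (x + y) = opL l c d x + opL l c d y := by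
  apply md_ext <;> intros <;> simp [add_mul]

lemma opL_zero (c d : ℝ) : opL l c d (0 : A) = 0 := by
  apply md_ext <;> intros <;> simp

/-! ### Relations between the operators -/

section oprels
variable (D : VscSystem s t u (Fin l) A)

lemma EE : opE D * opE D = 0 := by
  apply md_ext <;> intros <;> simp [D.H_sq']

lemma EH (hu : u * u = 1) (i) : opE D * opL l u t (D.H i) = u • (opL l u t (D.H i) * opE D) := by
  apply md_ext <;> intros <;> simp [smul_smul, hu]
  rw [D.HH' i, map_smul]
  match_scalars
  grind

lemma EO (ht : t * t = 1) (i j) :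
    opE D * opL l t (-s) (D.O i j) = t • (opL l t (-s) (D.O i j) * opE D) := by
  apply md_ext <;> intros <;> simp [smul_smul, ht, D.HO']
  match_scalars
  grind

lemma WO (hs : s * s = 1) (ht : t * t = 1) (i j k) :
    opW D i * opL l t (-s) (D.O j k) = (-s) • (opL l t (-s) (D.O j k) * opW D i) := by
  apply md_ext
  · intros; simp [smul_smul, hs]
  · intros; simp [D.HO', smul_smul, hs, ht]
  · intro r a
    simp [smul_smul, hs, smul_sub]
    rw [D.OO' j k]
    simp only [map_smul]
    match_scalars <;> grind

lemma EW (ht : t * t = 1) (i) : opE D * opW D i = t • (opW D i * opE D) := by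
  apply md_ext <;> intros <;> simp [smul_smul, ht, D.H_sq', D.HO', smul_sub]
  rw [D.OH_eq' ht]

lemma HW (i j) : opL l u t (D.H j) * opW D i = t • (opW D i * opL l u t (D.H j)) := by
  apply md_ext <;> intros <;> simp [smul_smul, D.HO', smul_sub]
  rw [D.HH' j, map_smul]
  module

lemma HW_eq (ht : t * t = 1) (i) : opL l u t (D.H i) * opW D i = opE D * opW D i := by
  apply md_ext <;> intros <;> simp [smul_smul, ht, D.H_sq', D.HO']
  rw [D.OH_eq' ht]

/-- The Arnold relation for `ω_{il}`, `ω_{jl}` and `ω_{ij}`, as an identity of operators. The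
graded commutativity of the operators of `ω_{il}` and `ω_{jl}` follows from it. -/
lemma WW_arnold (hs : s * s = 1) (ht : t * t = 1) (i j) :
    opW D i * opW D j = opL l t (-s) (D.O i j) * (opW D j - opW D i) := by
  have h0 := D.O_symm i j
  apply md_ext
  · intro a
    simp [h0]
    abel
  · intro a
    simp [h0, D.OH_eq' ht i j]
    abel
  · intro k a
    rw [D.O_symm j i]
    simp only [Module.End.mul_apply, LinearMap.sub_apply, opW_w, map_sub, opL_w, smul_mul_assoc,
      map_smul, D.arnold_target hs i j k a]
    match_scalars <;> grind

lemma WW_comm (hs : s * s = 1) (ht : t * t = 1) (i j) :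
    opW D i * opW D j = (-s) • (opW D j * opW D i) := by
  rw [D.WW_arnold hs ht, D.WW_arnold hs ht, D.O_symm i j, opL_smul, smul_mul_assoc, smul_smul,
    neg_mul, hs]
  refine LinearMap.ext fun v => ?_
  simp

lemma WW_self (i) : opW D i * opW D i = 0 := by
  apply md_ext <;> intros <;> simp [D.O_self, D.O_sq']

end oprels

/-! ### The extended system -/

/-- The operator on `Md l A` attached to `ω_{ij}`, for `i` and `j` in `Fin (l + 1)`. -/
noncomputable def extO (D : VscSystem s t u (Fin l) A) (i j : Fin (l + 1)) :
    Module.End ℝ (Md l A) :=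
  Fin.lastCases (motive := fun _ => Module.End ℝ (Md l A))
    (Fin.lastCases (motive := fun _ => Module.End ℝ (Md l A)) 0 (fun j => s • opW D j) j)
    (fun i => Fin.lastCases (motive := fun _ => Module.End ℝ (Md l A)) (opW D i)
      (fun j => opL l t (-s) (D.O i j)) j) i

/-- The operator on `Md l A` attached to `η_i`, for `i` in `Fin (l + 1)`. -/
noncomputable def extH (D : VscSystem s t u (Fin l) A) (i : Fin (l + 1)) :
    Module.End ℝ (Md l A) :=
  Fin.lastCases (motive := fun _ => Module.End ℝ (Md l A)) (opE D)
    (fun i => opL l u t (D.H i)) i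

section
variable (D : VscSystem s t u (Fin l) A)

@[simp] lemma extO_ll : extO D (Fin.last l) (Fin.last l) = 0 := by simp [extO]
@[simp] lemma extO_lc (j : Fin l) : extO D (Fin.last l) j.castSucc = s • opW D j := by simp [extO]
@[simp] lemma extO_cl (i : Fin l) : extO D i.castSucc (Fin.last l) = opW D i := by simp [extO]
@[simp] lemma extO_cc (i j : Fin l) : extO D i.castSucc j.castSucc = opL l t (-s) (D.O i j) := by
  simp [extO]
@[simp] lemma extH_l : extH D (Fin.last l) = opE D := by simp [extH]
@[simp] lemma extH_c (i : Fin l) : extH D i.castSucc = opL l u t (D.H i) := by simp [extH]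

/-- `WW_arnold` in cyclic form. -/
lemma arnold_ccl (hs : s * s = 1) (ht : t * t = 1) (i j) :
    opL l t (-s) (D.O i j) * opW D j + opW D j * (s • opW D i)
      + (s • opW D i) * opL l t (-s) (D.O i j) = 0 := by
  rw [smul_mul_assoc, WO D hs ht, mul_smul_comm, WW_comm D hs ht j i, WW_arnold D hs ht]
  refine LinearMap.ext fun v => ?_
  simp [smul_smul, hs]

/-- A system on `l` points in `A` yields a system on `l + 1` points in the endomorphisms of
`Md l A`. -/
noncomputable def extend (hs : s * s = 1) (ht : t * t = 1) (hu : u * u = 1) :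
    VscSystem s t u (Fin (l + 1)) (Module.End ℝ (Md l A)) where
  O := extO D
  H := extH D
  O_self i := by
    cases i using Fin.lastCases <;> simp [D.O_self, opL_zero]
  O_symm i j := by
    cases i using Fin.lastCases <;> cases j using Fin.lastCases <;>
      simp [smul_smul, hs]
    rw [D.O_symm, opL_smul]
  O_sq i j := by
    cases i using Fin.lastCases <;> cases j using Fin.lastCases <;>
      simp [WW_self, opL_mul, D.O_sq, opL_zero]
  OO i j k r := by
    cases i using Fin.lastCases <;> cases j using Fin.lastCases <;>
    cases k using Fin.lastCases <;> cases r using Fin.lastCases <;>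
      simp only [extO_ll, extO_lc, extO_cl, extO_cc, mul_zero, zero_mul, smul_zero]
    -- With the zero operators gone, each case is a relation between two `opW`, one `opW` and one
    -- `opL`, or two `opL`.
    all_goals
      try simp only [smul_mul_assoc, mul_smul_comm]
      first
        | rw [WW_comm D hs ht]
        | rw [WO D hs ht]
        | rw [opL_mul, opL_mul, D.OO, opL_smul]
      try (match_scalars <;> grind)
  HO i j k := by
    cases i using Fin.lastCases <;> cases j using Fin.lastCases <;>
    cases k using Fin.lastCases <;>
      simp only [extO_ll, extO_lc, extO_cl, extO_cc, mul_zero, zero_mul, smul_zero, extH_l, extH_c]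
    all_goals
      try simp only [smul_mul_assoc, mul_smul_comm]
      first
        | rw [EW D ht]
        | rw [EO D ht]
        | rw [HW D]
        | rw [opL_mul, opL_mul, D.HO, opL_smul, mul_comm u t, mul_comm t (-s)]
      try module
  HH i j := by
    cases i using Fin.lastCases <;> cases j using Fin.lastCases <;>
      simp only [extH_l, extH_c, EE, smul_zero]
    · exact EH D hu _
    · rw [EH D hu, smul_smul, hu, one_smul]
    · rw [opL_mul, opL_mul, D.HH, opL_smul]
  H_sq i := by
    cases i using Fin.lastCases <;> simp [EE, opL_mul, D.H_sq, opL_zero]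
  HO_eq i j := by
    cases i using Fin.lastCases <;> cases j using Fin.lastCases <;>
      simp only [extO_ll, extO_lc, extO_cl, extO_cc, mul_zero, extH_l, extH_c]
    · rw [mul_smul_comm, mul_smul_comm, HW_eq D ht]
    · rw [HW_eq D ht]
    · rw [opL_mul, opL_mul, D.HO_eq]
  arnold i j k := by
    cases i using Fin.lastCases <;> cases j using Fin.lastCases <;>
    cases k using Fin.lastCases <;>
      simp only [extO_ll, extO_lc, extO_cl, extO_cc, mul_zero, zero_mul, add_zero,
        zero_add]
    · simp [WW_self]
    · simp [WW_self]
    · rw [← arnold_ccl D hs ht]; abel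
    · simp [WW_self]
    · rw [← arnold_ccl D hs ht]; abel
    · rw [← arnold_ccl D hs ht]
    · rw [opL_mul, opL_mul, opL_mul, ← opL_add, ← opL_add, D.arnold, opL_zero]
end
end ext

/-! ### The algebra and its representation -/

section algebra
variable {n m l : ℕ}

/-- The class of a generator in `VscAlgebra n m l`. -/
noncomputable def gen (n m l : ℕ) (g : VscGen l) : VscAlgebra n m l :=
  RingQuot.mkAlgHom ℝ (VscRel n m l) (FreeAlgebra.ι ℝ g)

/-- The class of `ω_{ij}`, extended by zero to `i = j`. -/
noncomputable def genO (n m l : ℕ) (i j : Fin l) : VscAlgebra n m l :=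
  if h : i ≠ j then gen n m l (Sum.inl ⟨(i, j), h⟩) else 0

/-- The class of `η_i`. -/
noncomputable def genH (n m l : ℕ) (i : Fin l) : VscAlgebra n m l := gen n m l (Sum.inr i)

lemma genO_self (i : Fin l) : genO n m l i i = 0 := by simp [genO]

lemma genO_ne {i j : Fin l} (h : i ≠ j) : genO n m l i j = gen n m l (Sum.inl ⟨(i, j), h⟩) := by
  simp [genO, h]

/-- The sign in `ω_{ji} = (-1)^n ω_{ij}`. -/
abbrev sg (n : ℕ) : ℝ := (-1) ^ n
/-- The sign for commuting an `η` and an `ω`. -/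
abbrev tg (n m : ℕ) : ℝ := (-1) ^ ((n - m - 1) * (n - 1))
/-- The sign for commuting two `η`s. -/
abbrev ug (n m : ℕ) : ℝ := (-1) ^ ((n - m - 1) * (n - m - 1))

lemma neg_one_pow_mul_self (a : ℕ) : ((-1 : ℝ) ^ a) * (-1) ^ a = 1 := by
  rw [← mul_pow]; simp

/-- The sign for commuting two `ω`s is `-(-1)^n`; truncated subtraction makes this fail at `n = 0`. -/
lemma neg_sg (hn : 1 ≤ n) : -sg n = (-1) ^ ((n - 1) * (n - 1)) := by
  obtain ⟨k, rfl⟩ := Nat.exists_eq_add_of_le' hn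
  rcases Nat.even_or_odd k with h | h
  · simp [sg, pow_succ, h.neg_one_pow, (h.mul_left k).neg_one_pow]
  · simp [sg, pow_succ, h.neg_one_pow, (h.mul h).neg_one_pow]

lemma rel_eq {a b : FreeAlgebra ℝ (VscGen l)} (h : VscRel n m l a b) :
    RingQuot.mkAlgHom ℝ (VscRel n m l) a = RingQuot.mkAlgHom ℝ (VscRel n m l) b :=
  RingQuot.mkAlgHom_rel ℝ h

lemma gen_comm (g h : VscGen l) : gen n m l g * gen n m l h =
    ((-1 : ℝ) ^ (vscDeg n m l g * vscDeg n m l h)) • (gen n m l h * gen n m l g) := by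
  simpa [gen] using rel_eq (VscRel.comm (n := n) (m := m) g h)

/-- The tautological system in the algebra itself. -/
noncomputable def canon (n m l : ℕ) (hn : 1 ≤ n) :
    VscSystem (sg n) (tg n m) (ug n m) (Fin l) (VscAlgebra n m l) where
  O := genO n m l
  H := genH n m l
  O_self := genO_self
  O_symm i j := by
    by_cases h : i = j
    · subst h; simp [genO_self]
    · rw [genO_ne h, genO_ne (Ne.symm h)]
      simpa [gen] using rel_eq (VscRel.sym (n := n) (m := m) i j h)
  O_sq i j := by
    by_cases h : i = j
    · subst h; simp [genO_self]
    · rw [genO_ne h]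
      simpa [gen] using rel_eq (VscRel.sq (n := n) (m := m) ⟨(i, j), h⟩)
  OO i j k r := by
    by_cases h : i = j
    · subst h; simp [genO_self]
    by_cases h' : k = r
    · subst h'; simp [genO_self]
    rw [genO_ne h, genO_ne h', gen_comm, neg_sg hn]
    simp [vscDeg]
  HO i j k := by
    by_cases h : j = k
    · subst h; simp [genO_self]
    rw [genO_ne h, genH, gen_comm]
    simp [vscDeg]
  HH i j := by
    rw [genH, genH, gen_comm]
    simp [vscDeg]
  H_sq i := by
    simpa [gen, genH] using rel_eq (VscRel.etaSq (n := n) (m := m) i)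
  HO_eq i j := by
    by_cases h : i = j
    · subst h; simp [genO_self]
    rw [genO_ne h]
    simpa [gen, genH] using rel_eq (VscRel.etaOmega (n := n) (m := m) i j h)
  arnold i j k := by
    have hsq : ∀ i j, genO n m l i j * genO n m l i j = 0 := by
      intro i j
      by_cases h : i = j
      · subst h; simp [genO_self]
      · rw [genO_ne h]
        simpa [gen] using rel_eq (VscRel.sq (n := n) (m := m) ⟨(i, j), h⟩)
    have hsymm : ∀ i j, genO n m l j i = sg n • genO n m l i j := by
      intro i j
      by_cases h : i = j
      · subst h; simp [genO_self]
      · rw [genO_ne h, genO_ne (Ne.symm h)]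
        simpa [gen] using rel_eq (VscRel.sym (n := n) (m := m) i j h)
    by_cases h : i = j
    · subst h; simp [genO_self, hsymm i k, hsq]
    by_cases hjk : j = k
    · subst hjk; simp [genO_self, hsymm i j, hsq]
    by_cases hki : k = i
    · subst hki; simp [genO_self, hsymm j k, hsq]
    rw [genO_ne h, genO_ne hjk, genO_ne hki]
    simpa [gen] using rel_eq (VscRel.arnold (n := n) (m := m) i j k h hjk hki)

/-- The universal property of `VscAlgebra`. -/
noncomputable def lift (hn : 1 ≤ n) {B : Type*} [Ring B] [Algebra ℝ B]
    (D : VscSystem (sg n) (tg n m) (ug n m) (Fin l) B) : VscAlgebra n m l →ₐ[ℝ] B :=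
  RingQuot.liftAlgHom ℝ ⟨FreeAlgebra.lift ℝ (Sum.elim (fun p => D.O p.1.1 p.1.2) D.H), by
    intro a b h
    induction h with
    | comm g h =>
      rcases g with g | g <;> rcases h with h | h <;> simp [vscDeg]
      · rw [D.OO, neg_sg hn]
      · rw [D.HO, smul_smul, mul_comm (n - 1), neg_one_pow_mul_self, one_smul]
      · rw [D.HO]
      · rw [D.HH]
    | sym i j h => simpa using D.O_symm i j
    | sq p => simpa using D.O_sq _ _
    | arnold i j k => simpa using D.arnold i j k
    | etaSq i => simpa using D.H_sq i
    | etaOmega i j => simpa using D.HO_eq i j⟩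

section
variable (hn : 1 ≤ n) {B : Type*} [Ring B] [Algebra ℝ B]
    (D : VscSystem (sg n) (tg n m) (ug n m) (Fin l) B)

@[simp] lemma lift_O (i j) : lift hn D (genO n m l i j) = D.O i j := by
  by_cases h : i = j
  · subst h; simp [genO_self, D.O_self]
  · simp [genO_ne h, gen, lift]

@[simp] lemma lift_H (i) : lift hn D (genH n m l i) = D.H i := by
  simp [genH, gen, lift]
end

/-- Induction over the generators `genO`, `genH` and the algebra operations. -/
lemma alg_induction {P : VscAlgebra n m l → Prop} (h0 : ∀ r : ℝ, P (algebraMap ℝ _ r))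
    (hO : ∀ i j, P (genO n m l i j)) (hH : ∀ i, P (genH n m l i))
    (hm : ∀ a b, P a → P b → P (a * b)) (ha : ∀ a b, P a → P b → P (a + b)) (x) : P x := by
  obtain ⟨y, rfl⟩ := RingQuot.mkAlgHom_surjective ℝ (VscRel n m l) x
  induction y using FreeAlgebra.induction with
  | grade0 r => simpa using h0 r
  | grade1 g =>
    rcases g with ⟨⟨i, j⟩, h⟩ | i
    · have := hO i j
      rwa [genO_ne h] at this
    · exact hH i
  | mul a b h1 h2 => simpa using hm _ _ h1 h2
  | add a b h1 h2 => simpa using ha _ _ h1 h2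

/-- The system obtained by forgetting the last point. -/
noncomputable def restrict {s t u : ℝ} {B : Type*} [Ring B] [Algebra ℝ B]
    (D : VscSystem s t u (Fin (l + 1)) B) : VscSystem s t u (Fin l) B where
  O i j := D.O i.castSucc j.castSucc
  H i := D.H i.castSucc
  O_self _ := D.O_self _
  O_symm _ _ := D.O_symm _ _
  O_sq _ _ := D.O_sq _ _
  OO _ _ _ _ := D.OO _ _ _ _
  HO _ _ _ := D.HO _ _ _
  HH _ _ := D.HH _ _
  H_sq _ := D.H_sq _
  HO_eq _ _ := D.HO_eq _ _
  arnold _ _ _ := D.arnold _ _ _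

/-- The map from the algebra on `l` points to that on `l + 1` points which keeps the indices of
the generators. -/
noncomputable def incl (n m l : ℕ) (hn : 1 ≤ n) : VscAlgebra n m l →ₐ[ℝ] VscAlgebra n m (l + 1) :=
  lift hn (restrict (canon n m (l + 1) hn))

/-- The representation of the algebra on `l + 1` points on the free module over the algebra on
`l` points. -/
noncomputable def rho (n m l : ℕ) (hn : 1 ≤ n) :
    VscAlgebra n m (l + 1) →ₐ[ℝ] Module.End ℝ (Md l (VscAlgebra n m l)) :=
  lift hn (extend (canon n m l hn) (neg_one_pow_mul_self _) (neg_one_pow_mul_self _)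
    (neg_one_pow_mul_self _))

end algebra

/-! ### The isomorphism with the free module -/

section iso
variable {n m l : ℕ} (hn : 1 ≤ n)

@[simp] lemma canon_O (i j) : (canon n m l hn).O i j = genO n m l i j := rfl
@[simp] lemma canon_H (i) : (canon n m l hn).H i = genH n m l i := rfl

@[simp] lemma incl_O (i j) :
    incl n m l hn (genO n m l i j) = genO n m (l + 1) i.castSucc j.castSucc := by
  simp [incl, restrict]

@[simp] lemma incl_H (i) : incl n m l hn (genH n m l i) = genH n m (l + 1) i.castSucc := by
  simp [incl, restrict]

@[simp] lemma rho_O (i j) : rho n m l hn (genO n m (l + 1) i j) = extO (canon n m l hn) i j := by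
  simp [rho, extend]

@[simp] lemma rho_H (i) : rho n m l hn (genH n m (l + 1) i) = extH (canon n m l hn) i := by
  simp [rho, extend]

/-- The map sending `w ⊗ a` to the product of the generator named by `w` and `a`. -/
noncomputable def psi (n m l : ℕ) (hn : 1 ≤ n) :
    Md l (VscAlgebra n m l) →ₗ[ℝ] VscAlgebra n m (l + 1) :=
  dsum fun w => match w with
    | none => (incl n m l hn).toLinearMap
    | some none => LinearMap.mulLeft ℝ (genH n m (l + 1) (Fin.last l)) ∘ₗ
        (incl n m l hn).toLinearMap
    | some (some j) => LinearMap.mulLeft ℝ (genO n m (l + 1) j.castSucc (Fin.last l)) ∘ₗ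
        (incl n m l hn).toLinearMap

@[simp] lemma psi_e (a) : psi n m l hn (S none a) = incl n m l hn a := by simp [psi, dsum_S]
@[simp] lemma psi_h (a) : psi n m l hn (S (some none) a) =
    genH n m (l + 1) (Fin.last l) * incl n m l hn a := by simp [psi, dsum_S]
@[simp] lemma psi_w (j a) : psi n m l hn (S (some (some j)) a) =
    genO n m (l + 1) j.castSucc (Fin.last l) * incl n m l hn a := by simp [psi, dsum_S]

/-- `psi` intertwines the operator of `ω_{ij}` with left multiplication by it. -/
lemma psi_O (i j x) : psi n m l hn (rho n m l hn (genO n m (l + 1) i j) x) =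
    genO n m (l + 1) i j * psi n m l hn x := by
  have hs : sg n * sg n = 1 := neg_one_pow_mul_self _
  have ht : tg n m * tg n m = 1 := neg_one_pow_mul_self _
  set C := canon n m (l + 1) hn with hC
  have key : psi n m l hn ∘ₗ rho n m l hn (genO n m (l + 1) i j) =
      LinearMap.mulLeft ℝ (genO n m (l + 1) i j) ∘ₗ psi n m l hn := by
    have hO : genO n m (l + 1) = C.O := rfl
    have hH : genH n m (l + 1) = C.H := rfl
    have hW : ∀ j : Fin l, psi n m l hn ∘ₗ opW (canon n m l hn) j =
        LinearMap.mulLeft ℝ (genO n m (l + 1) j.castSucc (Fin.last l)) ∘ₗ psi n m l hn := by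
      intro j
      apply md_lext
      · intro a; simp
      · intro a
        simp
        simp only [hO, hH]
        rw [C.OH_eq' ht]
      · intro k a
        simp
        simp only [hO]
        rw [C.arnold_target hs _ j.castSucc]
    cases i using Fin.lastCases with
    | last =>
      cases j using Fin.lastCases with
      | last => simp [genO_self]
      | cast j =>
        have h1 : genO n m (l + 1) (Fin.last l) j.castSucc =
          sg n • genO n m (l + 1) j.castSucc (Fin.last l) := C.O_symm _ _
        rw [rho_O, extO_lc, h1, LinearMap.comp_smul, hW]
        ext x
        simp
    | cast i =>
      cases j using Fin.lastCases with
      | last => simp [hW]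
      | cast j =>
        apply md_lext
        · intro a; simp
        · intro a
          simp
          simp only [hO, hH]
          rw [C.HO', smul_smul, ht, one_smul]
        · intro k a
          simp
          simp only [hO]
          rw [C.OO' i.castSucc]
          exact (neg_smul (sg n) (C.O k.castSucc (Fin.last l) *
            (C.O i.castSucc j.castSucc * incl n m l hn a))).symm
  exact LinearMap.congr_fun key x

/-- `psi` intertwines the operator of `η_i` with left multiplication by it. -/
lemma psi_H (i x) : psi n m l hn (rho n m l hn (genH n m (l + 1) i) x) =
    genH n m (l + 1) i * psi n m l hn x := by
  have ht : tg n m * tg n m = 1 := neg_one_pow_mul_self _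
  set C := canon n m (l + 1) hn with hC
  have key : psi n m l hn ∘ₗ rho n m l hn (genH n m (l + 1) i) =
      LinearMap.mulLeft ℝ (genH n m (l + 1) i) ∘ₗ psi n m l hn := by
    have hO : genO n m (l + 1) = C.O := rfl
    have hH : genH n m (l + 1) = C.H := rfl
    cases i using Fin.lastCases
    · apply md_lext
      · intro a; simp
      · intro a
        simp
        simp only [hH, C.H_sq']
      · intro k a
        simp
        simp only [hO, hH]
        rw [C.HO', C.OH_eq' ht]
    · apply md_lext
      · intro a; simp
      · intro a
        simp
        simp only [hH]
        rw [C.HH' (Fin.castSucc _)]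
      · intro k a
        simp
        simp only [hO, hH]
        rw [C.HO']
  exact LinearMap.congr_fun key x

lemma psi_rho (x y) : psi n m l hn (rho n m l hn x y) = x * psi n m l hn y := by
  induction x using alg_induction generalizing y with
  | h0 r => simp [Algebra.algebraMap_eq_smul_one]
  | hO i j => exact psi_O hn i j y
  | hH i => exact psi_H hn i y
  | hm a b ha hb => rw [map_mul, Module.End.mul_apply, ha, hb, mul_assoc]
  | ha a b ha hb => rw [map_add, LinearMap.add_apply, map_add, ha, hb, add_mul]

lemma rho_incl (x y) : rho n m l hn (incl n m l hn x) (S none y) = S none (x * y) := by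
  induction x using alg_induction generalizing y with
  | h0 r => simp [Algebra.algebraMap_eq_smul_one]
  | hO i j => simp
  | hH i => simp
  | hm a b ha hb => rw [map_mul, map_mul, Module.End.mul_apply, hb, ha, mul_assoc]
  | ha a b ha hb => rw [map_add, map_add, LinearMap.add_apply, ha, hb, add_mul, map_add]

/-- The elements `1`, `η_l`, `ω_{jl}` generate the algebra as a module over that on `l` points. -/
lemma psi_phi (x) : psi n m l hn (rho n m l hn x (S none 1)) = x := by
  rw [psi_rho]; simp

/-- The elements `1`, `η_l`, `ω_{jl}` are independent over the algebra on `l` points. -/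
lemma phi_psi (x) : rho n m l hn (psi n m l hn x) (S none 1) = x := by
  let phi : VscAlgebra n m (l + 1) →ₗ[ℝ] Md l (VscAlgebra n m l) :=
    LinearMap.applyₗ (S none 1) ∘ₗ (rho n m l hn).toLinearMap
  have : phi ∘ₗ psi n m l hn = LinearMap.id := by
    apply md_lext <;> intros <;> simp [phi, rho_incl]
  exact LinearMap.congr_fun this x

end iso

/-! ### Degrees and the recursion -/

section grading
variable {n m l : ℕ}

lemma gen_mul_mem (g : VscGen l) {k : ℕ} {y} (hy : y ∈ vscGraded n m l k) :
    gen n m l g * y ∈ vscGraded n m l (k + vscDeg n m l g) := by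
  induction hy using Submodule.span_induction with
  | mem x hx =>
    obtain ⟨w, hw, rfl⟩ := hx
    refine Submodule.subset_span ⟨g :: w, by simp [hw, add_comm], by simp [gen]⟩
  | zero => simp
  | add x y _ _ hx hy => rw [mul_add]; exact add_mem hx hy
  | smul c x _ hx => rw [mul_smul_comm]; exact Submodule.smul_mem _ _ hx

lemma genO_mul_mem (i j : Fin l) {k : ℕ} {y} (hy : y ∈ vscGraded n m l k) :
    genO n m l i j * y ∈ vscGraded n m l (k + (n - 1)) := by
  by_cases h : i = j
  · subst h; simp [genO_self]
  · have h' := gen_mul_mem (n := n) (m := m) (Sum.inl ⟨(i, j), h⟩ : VscGen l) hy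
    simp only [vscDeg] at h'
    rw [genO_ne h]
    exact h'

lemma genH_mul_mem (i : Fin l) {k : ℕ} {y} (hy : y ∈ vscGraded n m l k) :
    genH n m l i * y ∈ vscGraded n m l (k + (n - m - 1)) := by
  have h := gen_mul_mem (n := n) (m := m) (Sum.inr i : VscGen l) hy
  simp only [vscDeg] at h
  rw [genH]
  exact h

/-- The graded piece of degree `k - r`, understood as zero when `k < r`. -/
noncomputable def shifted (n m l r k : ℕ) : Submodule ℝ (VscAlgebra n m l) :=
  if r ≤ k then vscGraded n m l (k - r) else ⊥

/-- A linear map raising degrees by `e` maps `shifted n m l r k` into `shifted n m l r' k'` when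
`k' - r' = k - r + e`. -/
lemma shifted_induct {r k r' k' e : ℕ} (hk : r' + k + e = k' + r)
    {f : VscAlgebra n m l →ₗ[ℝ] VscAlgebra n m l}
    (hf : ∀ k y, y ∈ vscGraded n m l k → f y ∈ vscGraded n m l (k + e)) {y}
    (hy : y ∈ shifted n m l r k) : f y ∈ shifted n m l r' k' := by
  unfold shifted at hy
  split_ifs at hy with h
  · have := hf _ _ hy
    rw [shifted, if_pos (by omega)]
    convert this using 2
    omega
  · rw [(Submodule.mem_bot ℝ).1 hy, map_zero]; exact zero_mem _

lemma shifted_id {r k r' k' : ℕ} {y} (hy : y ∈ shifted n m l r k) (hk : r' + k = k' + r) :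
    y ∈ shifted n m l r' k' :=
  shifted_induct (f := LinearMap.id) (e := 0) hk (fun _ _ h => h) hy

lemma shifted_O (i j) {r k r' k' : ℕ} {y} (hy : y ∈ shifted n m l r k)
    (hk : r' + k + (n - 1) = k' + r) : genO n m l i j * y ∈ shifted n m l r' k' :=
  shifted_induct (f := LinearMap.mulLeft ℝ (genO n m l i j)) hk
    (fun _ _ h => genO_mul_mem i j h) hy

lemma shifted_H (i) {r k r' k' : ℕ} {y} (hy : y ∈ shifted n m l r k)
    (hk : r' + k + (n - m - 1) = k' + r) : genH n m l i * y ∈ shifted n m l r' k' :=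
  shifted_induct (f := LinearMap.mulLeft ℝ (genH n m l i)) hk
    (fun _ _ h => genH_mul_mem i h) hy

/-- The degree of the generator named by an index. -/
def idxDeg (n m : ℕ) : Idx l → ℕ
  | none => 0
  | some none => n - m - 1
  | some (some _) => n - 1

/-- The degree-`k` part of the free module. -/
noncomputable def mdGraded (n m l k : ℕ) : Submodule ℝ (Md l (VscAlgebra n m l)) :=
  ⨅ w, (shifted n m l (idxDeg n m w) k).comap (coord w)

lemma mem_mdGraded {k x} : x ∈ mdGraded n m l k ↔
    ∀ w, coord w x ∈ shifted n m l (idxDeg n m w) k := by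
  simp [mdGraded]

lemma S_mem {k w a} (h : a ∈ shifted n m l (idxDeg n m w) k) : S w a ∈ mdGraded n m l k := by
  rw [mem_mdGraded]
  intro v
  by_cases hv : v = w
  · subst hv; rwa [coord_S_same]
  · rw [coord_S_ne hv]; exact zero_mem _

/-- Membership of images of homogeneous elements is tested on each copy of the algebra. -/
lemma map_mem_of_S {N : Type*} [AddCommGroup N] [Module ℝ N] {f : Md l (VscAlgebra n m l) →ₗ[ℝ] N}
    {P : Submodule ℝ N} {k : ℕ}
    (h0 : ∀ a ∈ shifted n m l 0 k, f (S none a) ∈ P)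
    (h1 : ∀ a ∈ shifted n m l (n - m - 1) k, f (S (some none) a) ∈ P)
    (h2 : ∀ j, ∀ a ∈ shifted n m l (n - 1) k, f (S (some (some j)) a) ∈ P)
    {x} (hx : x ∈ mdGraded n m l k) : f x ∈ P := by
  rw [mem_mdGraded] at hx
  rw [← sum_S_coord x, map_sum]
  refine Submodule.sum_mem _ fun w _ => ?_
  rcases w with _ | _ | j
  exacts [h0 _ (hx none), h1 _ (hx (some none)), h2 j _ (hx (some (some j)))]

variable (hn : 1 ≤ n)

lemma opW_mem (j) {k x} (hx : x ∈ mdGraded n m l k) :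
    opW (canon n m l hn) j x ∈ mdGraded n m l (k + (n - 1)) := by
  refine map_mem_of_S (fun a ha => ?_) (fun a ha => ?_) (fun i a ha => ?_) hx
  · simp only [opW_e]
    exact S_mem (shifted_id ha (by simp [idxDeg]; omega))
  · simp only [opW_h]
    exact S_mem (shifted_H _ ha (by simp [idxDeg]; omega))
  · simp only [opW_w]
    exact sub_mem (S_mem (shifted_O _ _ ha (by simp [idxDeg]; omega)))
      (S_mem (shifted_O _ _ ha (by simp [idxDeg]; omega)))

lemma opE_mem {k x} (hx : x ∈ mdGraded n m l k) :
    opE (canon n m l hn) x ∈ mdGraded n m l (k + (n - m - 1)) := by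
  refine map_mem_of_S (fun a ha => ?_) (fun a ha => ?_) (fun i a ha => ?_) hx
  · simp only [opE_e]
    exact S_mem (shifted_id ha (by simp [idxDeg]; omega))
  · simp
  · simp only [opE_w]
    exact Submodule.smul_mem _ _ (S_mem (shifted_H _ ha (by simp [idxDeg]; omega)))

lemma opL_mem (c d : ℝ) {b : VscAlgebra n m l} {e : ℕ}
    (hb : ∀ k y, y ∈ vscGraded n m l k → b * y ∈ vscGraded n m l (k + e)) {k x}
    (hx : x ∈ mdGraded n m l k) : opL l c d b x ∈ mdGraded n m l (k + e) := by
  have key : ∀ r a, a ∈ shifted n m l r k → b * a ∈ shifted n m l r (k + e) := fun r a ha =>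
    shifted_induct (f := LinearMap.mulLeft ℝ b) (e := e) (by omega) hb ha
  refine map_mem_of_S (fun a ha => ?_) (fun a ha => ?_) (fun i a ha => ?_) hx
  · simp only [opL_e]
    exact S_mem (key _ _ ha)
  · simp only [opL_h]
    exact Submodule.smul_mem _ _ (S_mem (key _ _ ha))
  · simp only [opL_w]
    exact Submodule.smul_mem _ _ (S_mem (key _ _ ha))

lemma rho_gen_mem (g : VscGen (l + 1)) {k x} (hx : x ∈ mdGraded n m l k) :
    rho n m l hn (gen n m (l + 1) g) x ∈ mdGraded n m l (k + vscDeg n m (l + 1) g) := by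
  rcases g with ⟨⟨i, j⟩, h⟩ | i
  · rw [← genO_ne h, rho_O]
    simp only [vscDeg]
    cases i using Fin.lastCases <;> cases j using Fin.lastCases
    · simp
    · simpa using Submodule.smul_mem _ _ (opW_mem hn _ hx)
    · simpa using opW_mem hn _ hx
    · rw [extO_cc]
      exact opL_mem _ _ (fun _ _ h => genO_mul_mem _ _ h) hx
  · rw [← genH, rho_H]
    simp only [vscDeg]
    cases i using Fin.lastCases
    · simpa using opE_mem hn hx
    · rw [extH_c]
      exact opL_mem _ _ (fun _ _ h => genH_mul_mem _ h) hx

lemma phi_mem {k x} (hx : x ∈ vscGraded n m (l + 1) k) :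
    rho n m l hn x (S none 1) ∈ mdGraded n m l k := by
  induction hx using Submodule.span_induction with
  | mem x hx =>
    obtain ⟨w, rfl, rfl⟩ := hx
    induction w with
    | nil =>
      rw [List.map_nil, List.map_nil, List.prod_nil, List.sum_nil, map_one, Module.End.one_apply]
      refine S_mem ?_
      rw [idxDeg, shifted, if_pos le_rfl]
      exact Submodule.subset_span ⟨[], by simp, by simp⟩
    | cons g w ih =>
      have := rho_gen_mem hn g ih
      rw [List.map_cons, List.map_cons, List.prod_cons, List.sum_cons, map_mul,
        add_comm (vscDeg n m (l + 1) g)]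
      exact this
  | zero => simp
  | add x y _ _ hx hy => rw [map_add, LinearMap.add_apply]; exact add_mem hx hy
  | smul c x _ hx => rw [map_smul, LinearMap.smul_apply]; exact Submodule.smul_mem _ _ hx

lemma incl_mem {k x} (hx : x ∈ vscGraded n m l k) :
    incl n m l hn x ∈ vscGraded n m (l + 1) k := by
  induction hx using Submodule.span_induction with
  | mem x hx =>
    obtain ⟨w, rfl, rfl⟩ := hx
    induction w with
    | nil => exact Submodule.subset_span ⟨[], by simp, by simp⟩
    | cons g w ih =>
      rw [List.map_cons, List.map_cons, List.prod_cons, List.sum_cons, map_mul,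
        add_comm (vscDeg n m l g)]
      rcases g with ⟨⟨i, j⟩, h⟩ | i
      · have h1 := genO_mul_mem i.castSucc j.castSucc ih
        rw [← incl_O hn, genO_ne h] at h1
        exact h1
      · have h1 := genH_mul_mem i.castSucc ih
        rw [← incl_H hn] at h1
        exact h1
  | zero => simp
  | add x y _ _ hx hy => rw [map_add]; exact add_mem hx hy
  | smul c x _ hx => rw [map_smul]; exact Submodule.smul_mem _ _ hx

lemma mul_incl_mem {r k : ℕ} {g : VscAlgebra n m (l + 1)}
    (hg : ∀ k y, y ∈ vscGraded n m (l + 1) k → g * y ∈ vscGraded n m (l + 1) (k + r))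
    {a} (ha : a ∈ shifted n m l r k) : g * incl n m l hn a ∈ vscGraded n m (l + 1) k := by
  unfold shifted at ha
  split_ifs at ha with h
  · have := hg _ _ (incl_mem hn ha)
    rwa [Nat.sub_add_cancel h] at this
  · rw [(Submodule.mem_bot ℝ).1 ha, map_zero, mul_zero]
    exact zero_mem _

lemma psi_mem {k x} (hx : x ∈ mdGraded n m l k) : psi n m l hn x ∈ vscGraded n m (l + 1) k := by
  refine map_mem_of_S (f := psi n m l hn) (fun a ha => ?_) (fun a ha => ?_) (fun i a ha => ?_) hx
  · rw [psi_e, ← one_mul (incl n m l hn a)]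
    refine mul_incl_mem hn (r := 0) (fun k y h => ?_) ha
    rw [one_mul]; exact h
  · rw [psi_h]
    exact mul_incl_mem hn (fun _ _ h => genH_mul_mem _ h) ha
  · rw [psi_w]
    exact mul_incl_mem hn (fun _ _ h => genO_mul_mem _ _ h) ha

/-- The graded pieces on `l + 1` points are direct sums of shifted graded pieces on `l` points. -/
noncomputable def gradedEquiv (k : ℕ) :
    (∀ w : Idx l, shifted n m l (idxDeg n m w) k) ≃ₗ[ℝ] vscGraded n m (l + 1) k where
  toFun f := ⟨psi n m l hn (∑ w, S w (f w : VscAlgebra n m l)),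
    psi_mem hn (Submodule.sum_mem _ fun w _ => S_mem (f w).2)⟩
  map_add' f g := by
    ext; simp [Finset.sum_add_distrib]
  map_smul' c f := by
    ext; simp [Finset.smul_sum]
  invFun x := fun w => ⟨coord w (rho n m l hn x (S none 1)), mem_mdGraded.1 (phi_mem hn x.2) w⟩
  left_inv f := by
    ext w
    simp only [phi_psi]
    rw [map_sum]
    rw [Finset.sum_eq_single w (fun v _ hv => coord_S_ne hv.symm _) (by simp), coord_S_same]
  right_inv x := by
    ext
    simp only [sum_S_coord, psi_phi]

/-- On no points, the algebra is `ℝ`, in degree `0`. -/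
lemma graded_zero (hn : 1 ≤ n) (k : ℕ) : Module.Finite ℝ (vscGraded n m 0 k) ∧
    Module.finrank ℝ (vscGraded n m 0 k) = if k = 0 then 1 else 0 := by
  have : IsEmpty (VscGen 0) := inferInstance
  -- The empty system in `ℝ`: it gives a homomorphism to `ℝ`, so the algebra is not zero.
  let D : VscSystem (sg n) (tg n m) (ug n m) (Fin 0) ℝ :=
    { O := fun i => i.elim0, H := fun i => i.elim0
      O_self := fun i => i.elim0
      O_symm := fun i => i.elim0
      O_sq := fun i => i.elim0
      OO := fun i => i.elim0
      HO := fun i => i.elim0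
      HH := fun i => i.elim0
      H_sq := fun i => i.elim0
      HO_eq := fun i => i.elim0
      arnold := fun i => i.elim0 }
  have h1 : (1 : VscAlgebra n m 0) ≠ 0 := by
    intro h
    simpa using congrArg (lift hn D) h
  split_ifs with h
  · have : vscGraded n m 0 k = Submodule.span ℝ {1} := by
      subst h
      refine congrArg _ (Set.ext fun x => ⟨?_, ?_⟩)
      · rintro ⟨w, hw, rfl⟩
        rw [List.eq_nil_of_length_eq_zero (l := w) (by
          cases w with | nil => rfl | cons a _ => exact this.elim a)]
        simp
      · rintro rfl
        exact ⟨[], by simp, by simp⟩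
    rw [this]
    exact ⟨inferInstance, finrank_span_singleton h1⟩
  · have : vscGraded n m 0 k = ⊥ := by
      refine Submodule.span_eq_bot.2 ?_
      rintro x ⟨w, hw, rfl⟩
      cases w with
      | nil => exact (h (by simpa using hw.symm)).elim
      | cons a _ => exact this.elim a
    rw [this]
    exact ⟨inferInstance, by simp⟩

lemma finite_and_finrank (hn : 1 ≤ n) (l k : ℕ) : Module.Finite ℝ (vscGraded n m l k) ∧
    Module.finrank ℝ (vscGraded n m l k) =
      ((∏ i ∈ Finset.range l,
        (1 + X ^ (n - m - 1) + (i : Polynomial ℕ) * X ^ (n - 1)) : Polynomial ℕ)).coeff k := by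
  induction l generalizing k with
  | zero => simpa [coeff_one] using graded_zero hn k
  | succ l ih =>
    have fin : ∀ r, Module.Finite ℝ (shifted n m l r k) := by
      intro r
      by_cases h : r ≤ k
      · rw [shifted, if_pos h]; exact (ih _).1
      · rw [shifted, if_neg h]; infer_instance
    have rk : ∀ r, Module.finrank ℝ (shifted n m l r k) = ((∏ i ∈ Finset.range l,
        (1 + X ^ (n - m - 1) + (i : Polynomial ℕ) * X ^ (n - 1)) : Polynomial ℕ) * X ^ r).coeff k := by
      intro r
      rw [coeff_mul_X_pow']
      by_cases h : r ≤ k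
      · rw [shifted, if_pos h, if_pos h]; exact (ih _).2
      · rw [shifted, if_neg h, if_neg h]; exact finrank_bot ℝ _
    have free : ∀ r, Module.Free ℝ (shifted n m l r k) := fun r => by
      -- The additive group is rebuilt on the given additive monoid: the group structure found from
      -- the ring `RingQuot` does not unify with it.
      let _ : AddCommGroup (shifted n m l r k) := Module.addCommMonoidToAddCommGroup ℝ
      exact Module.Free.of_divisionRing ℝ _
    have e := gradedEquiv (n := n) (m := m) (l := l) hn k
    refine ⟨Module.Finite.equiv e, ?_⟩
    rw [← e.finrank_eq, Module.finrank_pi_fintype, Fintype.sum_option, Fintype.sum_option]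
    refine (congrArg₂ (· + ·) (rk 0) (congrArg₂ (· + ·) (rk (n - m - 1))
      (Finset.sum_congr rfl fun _ _ => rk (n - 1)))).trans ?_
    simp only [pow_zero, mul_one]
    rw [Finset.prod_range_succ, mul_add, mul_add, coeff_add, coeff_add, mul_left_comm,
      ← C_eq_natCast, coeff_C_mul]
    simp [add_assoc]

end grading

end VscSystem

/-- For `n − 2 ≥ m ≥ 1`, the Poincaré polynomial of
`vsc^∨_{mn}(0,l)` equals `∏_{i=0}^{l-1} (1 + t^{n-m-1} + i·t^{n-1})`: the
dimension of each graded piece is the corresponding coefficient of the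
product. -/
theorem vsc_poincare_polynomial (n m l : ℕ) (hm : 1 ≤ m) (hmn : m + 2 ≤ n) (k : ℕ) :
    Module.finrank ℝ (vscGraded n m l k) =
      ((∏ i ∈ Finset.range l,
        (1 + X ^ (n - m - 1) + (i : Polynomial ℕ) * X ^ (n - 1)) : Polynomial ℕ)).coeff k := by
  exact (VscSystem.finite_and_finrank (by omega) l k).2
end

section
/- For n ≥ 2, the Poincaré polynomial of the Arnold algebra e_n^∨(l) = H^*(Conf_{ℝ^n}(l)) equals ∏_{i=0}^{l-1}(1 + i·t^{n-1}). -/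
/-!
Write `A_l` for the Arnold algebra on `l` points, `d = n - 1`, `s = (-1)^d`, and `e_k = ω_{k,l}` for
the generators of `A_{l+1}` involving the new point. The key fact is that `A_{l+1}` is a free left
`A_l`-module on `1, e_0, …, e_{l-1}`. In word length `r` this gives
`dim A_{l+1}^{(r+1)} = dim A_l^{(r+1)} + l · dim A_l^{(r)}`, which is the recursion for the
coefficients of `∏_{i<l} (1 + i t)`; replacing `t` by `t^d` passes from word length to degree.

The multiplication map `φ : W = A_l ⊕ ⨁_k A_l e_k → A_{l+1}` is onto because the relations
`e_i a = par(a) e_i` and `e_i e_k = ω_{ik} (e_k - e_i)` make its image stable under left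
multiplication by the generators (`φ_L`, `φ_E`, `map_S`). It is injective because the same two
formulas define operators `E i` on `W` which, together with left multiplication by `A_l`, satisfy
all Arnold relations (`E_comm`, `E_arnold`, `extend_isFamily`). Hence `A_{l+1}` acts on `W`, and
acting on the vector `1 ∈ W` is a left inverse of `φ` (`ψ_φ`).

Setting `ω_{ii} = 0` makes every relation valid for all indices, so that coincident indices need no
separate treatment after `om_isFamily`.
-/

open Polynomial

/-- Generators `ω_{ij}` (for `i ≠ j`) of the Arnold algebra `e_n^∨(l)`. -/
abbrev ArnoldGen (l : ℕ) : Type := {p : Fin l × Fin l // p.1 ≠ p.2}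

/-- The defining relations of the Arnold algebra `e_n^∨(l)`:
graded commutativity of the degree-`(n−1)` generators, the symmetry relation
`ω_{ji} = (−1)^n ω_{ij}`, the square-zero relation `ω_{ij}² = 0`, and the
Arnold relation `ω_{ij}ω_{jk} + ω_{jk}ω_{ki} + ω_{ki}ω_{ij} = 0`. -/
inductive ArnoldRel (n l : ℕ) :
    FreeAlgebra ℝ (ArnoldGen l) → FreeAlgebra ℝ (ArnoldGen l) → Prop
  | comm (p q : ArnoldGen l) :
      ArnoldRel n l (FreeAlgebra.ι ℝ p * FreeAlgebra.ι ℝ q)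
        (((-1 : ℝ) ^ ((n - 1) * (n - 1))) • (FreeAlgebra.ι ℝ q * FreeAlgebra.ι ℝ p))
  | sym (i j : Fin l) (h : i ≠ j) :
      ArnoldRel n l (FreeAlgebra.ι ℝ ⟨(j, i), h.symm⟩)
        (((-1 : ℝ) ^ n) • FreeAlgebra.ι ℝ ⟨(i, j), h⟩)
  | sq (p : ArnoldGen l) :
      ArnoldRel n l (FreeAlgebra.ι ℝ p * FreeAlgebra.ι ℝ p) 0
  | arnold (i j k : Fin l) (hij : i ≠ j) (hjk : j ≠ k) (hki : k ≠ i) :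
      ArnoldRel n l
        (FreeAlgebra.ι ℝ ⟨(i, j), hij⟩ * FreeAlgebra.ι ℝ ⟨(j, k), hjk⟩
          + FreeAlgebra.ι ℝ ⟨(j, k), hjk⟩ * FreeAlgebra.ι ℝ ⟨(k, i), hki⟩
          + FreeAlgebra.ι ℝ ⟨(k, i), hki⟩ * FreeAlgebra.ι ℝ ⟨(i, j), hij⟩) 0

/-- The Arnold algebra `e_n^∨(l) = H^*(Conf_{ℝ^n}(l))`, presented by generators
and relations. -/
abbrev ArnoldAlgebra (n l : ℕ) : Type := RingQuot (ArnoldRel n l)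

/-- The degree-`k` graded piece of the Arnold algebra: the span of products of
generators of total degree `k` (each generator has degree `n − 1`). -/
noncomputable def arnoldGraded (n l : ℕ) (k : ℕ) : Submodule ℝ (ArnoldAlgebra n l) :=
  Submodule.span ℝ {x | ∃ w : List (ArnoldGen l), w.length * (n - 1) = k ∧
    x = (w.map (fun p => RingQuot.mkAlgHom ℝ (ArnoldRel n l) (FreeAlgebra.ι ℝ p))).prod}

namespace Arnold

/-- A family `y i j` in an algebra satisfying the relations of the Arnold algebra, with
`s = (-1)^(n-1)` and the convention `y i i = 0`. With this convention all relations hold for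
arbitrary, possibly equal, indices. -/
structure IsFamily (s : ℝ) {l : ℕ} {B : Type*} [Ring B] [Algebra ℝ B]
    (y : Fin l → Fin l → B) : Prop where
  diag : ∀ i, y i i = 0
  comm : ∀ i j k m, y i j * y k m = s • (y k m * y i j)
  sym : ∀ i j, y j i = -(s • y i j)
  sq : ∀ i j, y i j * y i j = 0
  arnold : ∀ i j k, y i j * y j k + y j k * y k i + y k i * y i j = 0

/-! ### Extending a family of generators by one index -/

section Extend

variable {l : ℕ} {B : Type*} [Ring B] [Algebra ℝ B]

/-- Extend a family `y` indexed by `Fin l` to one indexed by `Fin (l + 1)`, by placing `e i` in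
position `(i, l)`, and hence `-(s • e i)` in position `(l, i)`. -/
noncomputable def extend (s : ℝ) (y : Fin l → Fin l → B) (e : Fin l → B)
    (i j : Fin (l + 1)) : B :=
  Fin.lastCases (motive := fun _ => B)
    (Fin.lastCases (motive := fun _ => B) 0 e i)
    (fun j => Fin.lastCases (motive := fun _ => B) (-(s • e j)) (fun i => y i j) i) j

variable {s : ℝ} {y : Fin l → Fin l → B} {e : Fin l → B}

@[simp] lemma extend_cast_cast (i j : Fin l) : extend s y e i.castSucc j.castSucc = y i j := by
  simp [extend]
@[simp] lemma extend_cast_last (i : Fin l) : extend s y e i.castSucc (Fin.last l) = e i := by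
  simp [extend]
@[simp] lemma extend_last_cast (i : Fin l) :
    extend s y e (Fin.last l) i.castSucc = -(s • e i) := by
  simp [extend]
@[simp] lemma extend_last_last : extend s y e (Fin.last l) (Fin.last l) = 0 := by
  simp [extend]

/-- The relations of the extended family, reduced to relations with one fixed orientation. -/
lemma extend_isFamily (hs : s = 1 ∨ s = -1) (hy : IsFamily s y)
    (hey : ∀ i j k, e k * y i j = s • (y i j * e k)) (hee : ∀ i j, e i * e j = s • (e j * e i))
    (hsq : ∀ i, e i * e i = 0)
    (har : ∀ i j, y i j * e j - s • (e j * e i) - s • (e i * y i j) = 0) :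
    IsFamily s (extend s y e) where
  diag i := by
    induction i using Fin.lastCases <;> simp [hy.diag]
  sym i j := by
    induction i using Fin.lastCases <;> induction j using Fin.lastCases <;> simp
    · rcases hs with rfl | rfl <;> simp
    · rw [hy.sym]
  sq i j := by
    induction i using Fin.lastCases <;> induction j using Fin.lastCases <;> simp [hsq, hy.sq]
  comm i j k m := by
    have hyy := hy.comm
    rcases hs with rfl | rfl <;> simp only [one_smul, neg_smul] at hyy hey hee ⊢ <;>
    induction i using Fin.lastCases <;> induction j using Fin.lastCases <;>
    induction k using Fin.lastCases <;> induction m using Fin.lastCases <;> simp <;>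
    first
    | exact hyy _ _ _ _
    | exact hee _ _
    | exact hey _ _ _
    | exact (hey _ _ _).symm
    | (rw [hey]; simp)
  arnold i j k := by
    have har' (i j : Fin l) : y i j * e j + e j * -(s • e i) + -(s • e i) * y i j = 0 := by
      rw [← har i j, mul_neg, neg_mul, mul_smul_comm, smul_mul_assoc]
      abel
    -- the index `l` occurs either once, giving a rotation of the relation above, or at least twice, and
    -- then the relation reduces to `hsq`
    induction i using Fin.lastCases <;> induction j using Fin.lastCases <;>
    induction k using Fin.lastCases <;> simp [hsq]
    · rename_i a b
      have := har' a b
      simp at this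
      rw [← this]; abel
    · rename_i a b
      have := har' b a
      simp at this
      rw [← this]; abel
    · rename_i a b
      have := har' a b
      simp at this
      rw [← this]
    · exact hy.arnold _ _ _

end Extend

/-! ### The Arnold algebra and its universal property -/

section Presentation

variable (d l : ℕ)

/-- The Arnold algebra `e_{d+1}^∨(l)`, whose generators have degree `d`. This is a copy of
`ArnoldAlgebra (d + 1) l`, carrying only the ring structure and the algebra structure over it, so
that `simp` meets a single path of instances. -/
def A : Type := ArnoldAlgebra (d + 1) l

noncomputable instance : Ring (A d l) := inferInstanceAs (Ring (RingQuot _))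

noncomputable instance : Algebra ℝ (A d l) := inferInstanceAs (Algebra ℝ (RingQuot _))

/-- The identity, passing between `ArnoldAlgebra (d + 1) l` and its copy `A d l`. -/
noncomputable def toA : ArnoldAlgebra (d + 1) l ≃ₐ[ℝ] A d l :=
  AlgEquiv.refl (R := ℝ) (A₁ := ArnoldAlgebra (d + 1) l)

/-- The quotient map from the free algebra. -/
noncomputable def mk : FreeAlgebra ℝ (ArnoldGen l) →ₐ[ℝ] A d l :=
  (toA d l).toAlgHom.comp (RingQuot.mkAlgHom ℝ (ArnoldRel (d + 1) l))

variable {d l} in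
lemma mk_rel {x y : FreeAlgebra ℝ (ArnoldGen l)} (h : ArnoldRel (d + 1) l x y) :
    mk d l x = mk d l y :=
  congrArg (toA d l) (RingQuot.mkAlgHom_rel ℝ h)

lemma mk_surjective : Function.Surjective (mk d l) :=
  (toA d l).surjective.comp (RingQuot.mkAlgHom_surjective ℝ _)

/-- The sign `(-1)^d` by which two generators commute. -/
noncomputable def sgn : ℝ := (-1) ^ d

lemma sgn_cases : sgn d = 1 ∨ sgn d = -1 := neg_one_pow_eq_or ℝ d

/-- The generator `ω_{ij}` for a pair `p = (i, j)` with `i ≠ j`. -/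
noncomputable def gen (p : ArnoldGen l) : A d l :=
  mk d l (FreeAlgebra.ι ℝ p)

/-- The generator `ω_{ij}`, extended by `ω_{ii} = 0`. -/
noncomputable def om (i j : Fin l) : A d l :=
  if h : i ≠ j then gen d l ⟨(i, j), h⟩ else 0

variable {d l}

lemma om_of_ne {i j : Fin l} (h : i ≠ j) : om d l i j = gen d l ⟨(i, j), h⟩ := dif_pos h

lemma om_self (i : Fin l) : om d l i i = 0 := dif_neg (by simp)

lemma gen_eq_om (p : ArnoldGen l) : gen d l p = om d l p.1.1 p.1.2 := (om_of_ne p.2).symm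

lemma pow_sq (d : ℕ) : (-1 : ℝ) ^ ((d + 1 - 1) * (d + 1 - 1)) = sgn d := by
  rw [Nat.add_sub_cancel, pow_mul]
  rcases sgn_cases d with h | h
  · rw [h, show (-1 : ℝ) ^ d = 1 from h, one_pow]
  · rw [show (-1 : ℝ) ^ d = -1 from h]; rfl

lemma gen_comm (p q : ArnoldGen l) : gen d l p * gen d l q = sgn d • (gen d l q * gen d l p) := by
  have := mk_rel (ArnoldRel.comm (n := d + 1) p q)
  rw [pow_sq] at this
  simpa only [map_mul, map_smul, gen] using this

lemma om_sym (i j : Fin l) : om d l j i = -(sgn d • om d l i j) := by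
  by_cases h : i = j
  · subst h; simp [om_self]
  · have := mk_rel (ArnoldRel.sym (n := d + 1) i j h)
    rw [om_of_ne h, om_of_ne (Ne.symm h), gen, this, map_smul, pow_succ]
    simp [gen, sgn]

lemma om_sq (i j : Fin l) : om d l i j * om d l i j = 0 := by
  by_cases h : i = j
  · subst h; simp [om_self]
  · have := mk_rel (ArnoldRel.sq (n := d + 1) (⟨(i, j), h⟩ : ArnoldGen l))
    rw [om_of_ne h]
    simpa [gen] using this

lemma om_isFamily : IsFamily (sgn d) (om d l) where
  diag := om_self
  comm i j k m := by
    by_cases h : i = j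
    · subst h; simp [om_self]
    by_cases h' : k = m
    · subst h'; simp [om_self]
    rw [om_of_ne h, om_of_ne h', gen_comm]
  sym := om_sym
  sq := om_sq
  arnold i j k := by
    -- if two indices coincide, two terms vanish and the third is a multiple of a square
    by_cases hij : i = j
    · subst hij
      rw [om_sym i k]
      simp [om_self, om_sq]
    by_cases hjk : j = k
    · subst hjk
      rw [om_sym i j]
      simp [om_self, om_sq]
    by_cases hki : k = i
    · subst hki
      rw [om_sym k j]
      simp [om_self, om_sq]
    have := mk_rel (ArnoldRel.arnold (n := d + 1) i j k hij hjk hki)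
    rw [om_of_ne hij, om_of_ne hjk, om_of_ne hki]
    simpa [gen] using this

/-- The Arnold relation written in `ω_{ij}`, `ω_{jk}`, `ω_{ik}` only. -/
lemma om_arnold (i j k : Fin l) : om d l i j * om d l j k =
    sgn d • (om d l j k * om d l i k) + om d l i j * om d l i k := by
  have h1 := om_isFamily.arnold (y := om d l) i j k
  rw [om_sym i k, neg_mul, smul_mul_assoc, om_isFamily.comm i k i j] at h1
  rcases sgn_cases d with h | h <;> rw [h] at h1 ⊢ <;> simp at h1 ⊢ <;>
    rw [← sub_eq_zero, ← h1] <;> abel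

/-- The universal property of the Arnold algebra. -/
noncomputable def lift {B : Type*} [Ring B] [Algebra ℝ B] (y : Fin l → Fin l → B)
    (hy : IsFamily (sgn d) y) : A d l →ₐ[ℝ] B :=
  (RingQuot.liftAlgHom ℝ ⟨FreeAlgebra.lift ℝ (fun p : ArnoldGen l => y p.1.1 p.1.2), by
    intro a b h
    induction h with
    | comm p q => rw [pow_sq]; simpa using hy.comm _ _ _ _
    | sym i j h => simpa [pow_succ, sgn] using hy.sym i j
    | sq p => simpa using hy.sq _ _
    | arnold i j k _ _ _ => simpa using hy.arnold i j k⟩).comp (toA d l).symm.toAlgHom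

lemma lift_om {B : Type*} [Ring B] [Algebra ℝ B] (y : Fin l → Fin l → B)
    (hy : IsFamily (sgn d) y) (i j : Fin l) : lift y hy (om d l i j) = y i j := by
  by_cases h : i = j
  · subst h; rw [om_self, map_zero, hy.diag]
  · rw [om_of_ne h]
    exact (RingQuot.liftAlgHom_mkAlgHom_apply ..).trans (FreeAlgebra.lift_ι_apply ..)

lemma induction {P : A d l → Prop} (algebraMap : ∀ r : ℝ, P (algebraMap ℝ _ r))
    (om : ∀ i j, P (om d l i j)) (mul : ∀ a b, P a → P b → P (a * b))
    (add : ∀ a b, P a → P b → P (a + b)) (a : A d l) : P a := by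
  obtain ⟨x, rfl⟩ := mk_surjective d l a
  induction x using FreeAlgebra.induction with
  | grade0 r => rw [AlgHom.commutes]; exact algebraMap r
  | grade1 p =>
    have := om p.1.1 p.1.2
    rwa [← gen_eq_om] at this
  | mul a b ha hb => rw [map_mul]; exact mul _ _ ha hb
  | add a b ha hb => rw [map_add]; exact add _ _ ha hb

lemma IsFamily.map {B C : Type*} [Ring B] [Algebra ℝ B] [Ring C] [Algebra ℝ C]
    {y : Fin l → Fin l → B} {s : ℝ} (hy : IsFamily s y) (f : B →ₐ[ℝ] C) :
    IsFamily s (fun i j => f (y i j)) where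
  diag i := by simp [hy.diag]
  comm i j k m := by rw [← map_mul, hy.comm, map_smul, map_mul]
  sym i j := by rw [hy.sym, map_neg, map_smul]
  sq i j := by rw [← map_mul, hy.sq, map_zero]
  arnold i j k := by simp only [← map_mul, ← map_add, hy.arnold, map_zero]

lemma IsFamily.comap {B : Type*} [Ring B] [Algebra ℝ B] {m : ℕ}
    {y : Fin m → Fin m → B} {s : ℝ} (hy : IsFamily s y) (f : Fin l → Fin m) :
    IsFamily s (fun i j => y (f i) (f j)) where
  diag _ := hy.diag _
  comm _ _ _ _ := hy.comm _ _ _ _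
  sym _ _ := hy.sym _ _
  sq _ _ := hy.sq _ _
  arnold _ _ _ := hy.arnold _ _ _

lemma IsFamily.smul {B : Type*} [Ring B] [Algebra ℝ B] {y : Fin l → Fin l → B} {s : ℝ}
    (hy : IsFamily s y) (c : ℝ) : IsFamily s (fun i j => c • y i j) where
  diag i := by simp [hy.diag]
  comm i j k m := by simp only [smul_mul_smul_comm, hy.comm i j k m]; rw [smul_comm]
  sym i j := by rw [hy.sym i j, smul_neg, smul_comm]
  sq i j := by simp [hy.sq]
  arnold i j k := by
    simp only [smul_mul_smul_comm, ← smul_add, hy.arnold, smul_zero]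

/-- The parity automorphism, multiplying a word of length `r` by `(-1)^(d r)`. -/
noncomputable def par : A d l →ₐ[ℝ] A d l :=
  lift (fun i j => sgn d • om d l i j) (om_isFamily.smul _)

@[simp] lemma par_om (i j : Fin l) : par (om d l i j) = sgn d • om d l i j := lift_om _ _ _ _

/-- An element that commutes up to sign with the generators commutes with everything up to the
parity automorphism. -/
lemma mul_eq_par_mul {B : Type*} [Ring B] [Algebra ℝ B] (f : A d l →ₐ[ℝ] B) (y : B)
    (h : ∀ i j, y * f (om d l i j) = sgn d • (f (om d l i j) * y)) (a : A d l) :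
    y * f a = f (par a) * y := by
  induction a using induction with
  | algebraMap r => simp only [AlgHom.commutes]; exact (Algebra.commutes r y).symm
  | om i j => rw [h, par_om, map_smul, smul_mul_assoc]
  | mul a b ha hb => rw [map_mul, ← mul_assoc, ha, mul_assoc, hb, map_mul, map_mul, mul_assoc]
  | add a b ha hb => simp only [map_add, mul_add, add_mul, ha, hb]

lemma om_mul (i j : Fin l) (a : A d l) : om d l i j * a = par a * om d l i j :=
  mul_eq_par_mul (AlgHom.id ℝ _) _ (fun _ _ => om_isFamily.comm _ _ _ _) a

end Presentation

/-! ### The action on the free module `W` -/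

section Module

variable (d l : ℕ)

/-- The free module `A d l ⊕ ⨁_k (A d l) e_k`, where `e_k` stands for `ω_{k,l}`. -/
abbrev W : Type := A d l × (Fin l → A d l)

variable {d l}

/-- The inclusion `a ↦ a` of the first summand. -/
noncomputable def u : A d l →ₗ[ℝ] W d l := LinearMap.inl ℝ _ _

/-- The inclusion `b ↦ b e_k` of the summand indexed by `k`. -/
noncomputable def v (k : Fin l) : A d l →ₗ[ℝ] W d l :=
  LinearMap.inr ℝ _ _ ∘ₗ LinearMap.single ℝ (fun _ => A d l) k

/-- The linear map out of `W` with given restrictions to the summands. -/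
noncomputable def elim {M : Type*} [AddCommGroup M] [Module ℝ M] (f : A d l →ₗ[ℝ] M)
    (g : Fin l → A d l →ₗ[ℝ] M) : W d l →ₗ[ℝ] M :=
  LinearMap.coprod f (LinearMap.lsum ℝ (fun _ => A d l) ℝ g)

section
variable {M : Type*} [AddCommGroup M] [Module ℝ M]

lemma elim_apply (f : A d l →ₗ[ℝ] M) (g : Fin l → A d l →ₗ[ℝ] M) (w : W d l) :
    elim f g w = f w.1 + ∑ k, g k (w.2 k) := by
  simp [elim, LinearMap.lsum_apply]

@[simp] lemma elim_u (f : A d l →ₗ[ℝ] M) (g : Fin l → A d l →ₗ[ℝ] M) (a : A d l) :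
    elim f g (u a) = f a := by
  simp [elim, u]

@[simp] lemma elim_v (f : A d l →ₗ[ℝ] M) (g : Fin l → A d l →ₗ[ℝ] M) (k : Fin l) (b : A d l) :
    elim f g (v k b) = g k b := by
  rw [elim_apply, Finset.sum_eq_single k] <;> simp +contextual [v]

lemma hom_ext {f g : W d l →ₗ[ℝ] M} (hu : ∀ a, f (u a) = g (u a))
    (hv : ∀ k b, f (v k b) = g (v k b)) : f = g := by
  apply LinearMap.prod_ext
  · ext a; exact hu a
  · apply LinearMap.pi_ext
    intro k b
    exact hv k b
end

/-- Left multiplication by `A d l` on `W`. -/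
noncomputable def L : A d l →ₐ[ℝ] Module.End ℝ (W d l) := Algebra.lsmul ℝ ℝ (W d l)

@[simp] lemma L_u (a b : A d l) : L a (u b) = u (a * b) := by
  simp [L, u]

@[simp] lemma L_v (a : A d l) (k : Fin l) (b : A d l) : L a (v k b) = v k (a * b) := by
  simp [L, v, ← Pi.single_smul]

/-- The operator by which `ω_{i,l}` acts on `W`: it is forced by `ω_{i,l} a = par a ω_{i,l}`
and by the Arnold relation in the form `e_i e_k = ω_{ik} (e_k - e_i)`. -/
noncomputable def E (i : Fin l) : Module.End ℝ (W d l) :=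
  elim (v i ∘ₗ par.toLinearMap)
    (fun k => (v k - v i) ∘ₗ LinearMap.mulLeft ℝ (om d l i k))

@[simp] lemma E_u (i : Fin l) (a : A d l) : E i (u a) = v i (par a) := by simp [E]

@[simp] lemma E_v (i k : Fin l) (b : A d l) :
    E i (v k b) = v k (om d l i k * b) - v i (om d l i k * b) := by simp [E]

lemma E_mul_L (i j k : Fin l) :
    E k * L (om d l i j) = sgn d • (L (om d l i j) * E k) := by
  apply hom_ext
  · intro a
    simp
  · intro m b
    simp only [Module.End.mul_apply, L_v, E_v, LinearMap.smul_apply, map_sub, ← mul_assoc]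
    rw [om_isFamily.comm k m i j]
    simp [smul_sub]

lemma E_comm (i j : Fin l) : E (d := d) i * E j = sgn d • (E j * E i) := by
  apply hom_ext
  · intro a
    simp only [Module.End.mul_apply, E_u, E_v, LinearMap.smul_apply, om_sym i j]
    rcases sgn_cases d with h | h <;> rw [h] <;> simp <;> abel
  · intro k b
    simp only [Module.End.mul_apply, E_v, LinearMap.smul_apply, om_sym i j, map_sub,
      ← mul_assoc]
    rw [om_isFamily.comm i k j k, om_arnold]
    rcases sgn_cases d with h | h <;> rw [h] <;> simp [add_mul] <;> abel

lemma E_sq (i : Fin l) : E (d := d) i * E i = 0 := by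
  apply hom_ext
  · intro a
    simp [om_self]
  · intro k b
    simp [← mul_assoc, om_self, om_sq]

/-- The Arnold relation for the indices `i, j, l`, where `ω_{l,i}` acts by `-(s • E i)`. -/
lemma E_arnold (i j : Fin l) :
    L (om d l i j) * E j - sgn d • (E j * E i) - sgn d • (E i * L (om d l i j)) = 0 := by
  apply hom_ext
  · intro a
    simp only [Module.End.mul_apply, E_u, E_v, L_u, L_v, LinearMap.smul_apply, om_sym i j,
      LinearMap.sub_apply, map_mul, par_om, LinearMap.zero_apply]
    rcases sgn_cases d with h | h <;> rw [h] <;> simp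
  · intro k b
    simp only [Module.End.mul_apply, E_v, L_v, LinearMap.smul_apply, om_sym i j, map_sub,
      ← mul_assoc, LinearMap.sub_apply, LinearMap.zero_apply]
    rw [om_isFamily.comm i k i j, om_arnold]
    rcases sgn_cases d with h | h <;> rw [h] <;> simp [add_mul] <;> abel

/-- The action of the generators of `A d (l + 1)` on `W` satisfies the Arnold relations. -/
lemma T_isFamily : IsFamily (sgn d) (extend (sgn d) (fun i j => L (om d l i j)) E) :=
  extend_isFamily (sgn_cases d) (om_isFamily.map L) E_mul_L E_comm E_sq E_arnold

end Module

/-! ### The isomorphism of `W` with the next Arnold algebra -/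

section Recursion

variable {d l : ℕ}

/-- The homomorphism `A d l → A d (l + 1)` sending `ω_{ij}` to `ω_{ij}`. -/
noncomputable def incl : A d l →ₐ[ℝ] A d (l + 1) :=
  lift (fun i j => om d (l + 1) i.castSucc j.castSucc) (om_isFamily.comap Fin.castSucc)

@[simp] lemma incl_om (i j : Fin l) :
    incl (om d l i j) = om d (l + 1) i.castSucc j.castSucc := lift_om _ _ _ _

variable (d) in
/-- The generator `e_k = ω_{k,l}` of `A d (l + 1)`. -/
noncomputable def e (k : Fin l) : A d (l + 1) := om d (l + 1) k.castSucc (Fin.last l)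

lemma e_mul_incl (k : Fin l) (a : A d l) : e d k * incl a = incl (par a) * e d k :=
  mul_eq_par_mul incl _ (fun i j => by rw [incl_om]; exact om_isFamily.comm _ _ _ _) a

/-- The Arnold relation for `i, k, l`, expressing products of two of the `e_k` through single ones. -/
lemma e_mul_e (i k : Fin l) : e d i * e d k = incl (om d l i k) * (e d k - e d i) := by
  have h1 := om_arnold (d := d) i.castSucc k.castSucc (Fin.last l)
  have h2 := om_isFamily.comm (y := om d (l + 1)) i.castSucc (Fin.last l) k.castSucc (Fin.last l)
  rw [← h2] at h1
  rw [incl_om, mul_sub, e, e, h1, add_sub_cancel_right]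

/-- The multiplication map `W → A d (l + 1)`, `a + ∑ b_k e_k ↦ a + ∑ b_k e_k`. -/
noncomputable def φ : W d l →ₗ[ℝ] A d (l + 1) :=
  elim incl.toLinearMap (fun k => LinearMap.mulRight ℝ (e d k) ∘ₗ incl.toLinearMap)

@[simp] lemma φ_u (a : A d l) : φ (u a) = incl a := by simp [φ]

@[simp] lemma φ_v (k : Fin l) (b : A d l) : φ (v k b) = incl b * e d k := by simp [φ]

lemma φ_L (a : A d l) (w : W d l) : φ (L a w) = incl a * φ w := by
  have : φ ∘ₗ L a = LinearMap.mulLeft ℝ (incl a) ∘ₗ φ := by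
    apply hom_ext <;> intros <;> simp [mul_assoc]
  exact LinearMap.congr_fun this w

lemma φ_E (i : Fin l) (w : W d l) : φ (E i w) = e d i * φ w := by
  have : φ ∘ₗ E i = LinearMap.mulLeft ℝ (e d i) ∘ₗ φ := by
    apply hom_ext
    · intro a
      simp [e_mul_incl]
    · intro k b
      simp only [LinearMap.comp_apply, E_v, map_sub, φ_v, LinearMap.mulLeft_apply]
      rw [← mul_assoc, e_mul_incl, mul_assoc, e_mul_e, om_mul, map_mul, mul_assoc, mul_assoc,
        mul_sub, mul_sub]
  exact LinearMap.congr_fun this w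

/-- The action of `A d (l + 1)` on `W`. -/
noncomputable def ψ : A d (l + 1) →ₐ[ℝ] Module.End ℝ (W d l) := lift _ T_isFamily

lemma ψ_incl (a : A d l) : ψ (incl a) = L a := by
  induction a using induction with
  | algebraMap r => simp only [AlgHom.commutes]
  | om i j => rw [incl_om, ψ, lift_om, extend_cast_cast]
  | mul a b ha hb => simp only [map_mul, ha, hb]
  | add a b ha hb => simp only [map_add, ha, hb]

lemma ψ_e (k : Fin l) : ψ (e d k) = E k := by
  rw [e, ψ, lift_om, extend_cast_last]

/-- Acting on the vector `1` inverts `φ`. -/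
lemma ψ_φ (w : W d l) : ψ (φ w) (u 1) = w := by
  have : LinearMap.applyₗ (u 1) ∘ₗ ψ.toLinearMap ∘ₗ φ = (LinearMap.id : W d l →ₗ[ℝ] W d l) := by
    apply hom_ext
    · intro a
      simp [ψ_incl]
    · intro k b
      simp [ψ_incl, ψ_e]
  exact LinearMap.congr_fun this w

lemma φ_injective : Function.Injective (φ (d := d) (l := l)) :=
  Function.LeftInverse.injective (g := fun x => ψ x (u 1)) ψ_φ

end Recursion

/-! ### Word length and dimensions -/

section Grading

variable (d l : ℕ)

/-- The span of the generators. Its power `Gens d l ^ r` is the span of the words of length `r`. -/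
noncomputable def Gens : Submodule ℝ (A d l) :=
  Submodule.span ℝ (Set.range fun p : Fin l × Fin l => om d l p.1 p.2)

variable {d l}

lemma om_mem (i j : Fin l) : om d l i j ∈ Gens d l := Submodule.subset_span ⟨(i, j), rfl⟩

lemma map_Gens_le {B : Type*} [Ring B] [Algebra ℝ B] (f : A d l →ₐ[ℝ] B) (M : Submodule ℝ B)
    (h : ∀ i j, f (om d l i j) ∈ M) : (Gens d l).map f.toLinearMap ≤ M := by
  rw [Gens, Submodule.map_span_le]
  rintro _ ⟨p, rfl⟩
  exact h _ _

lemma par_mem {r : ℕ} {a : A d l} (ha : a ∈ Gens d l ^ r) : par a ∈ Gens d l ^ r := by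
  have h := Submodule.map_pow (Gens d l) (par (d := d) (l := l)) r
  have h2 : (Gens d l ^ r).map par.toLinearMap ≤ Gens d l ^ r := by
    rw [h]
    exact pow_le_pow_left' (map_Gens_le _ _ fun i j => by
      rw [par_om]; exact Submodule.smul_mem _ _ (om_mem i j)) r
  exact h2 (Submodule.mem_map_of_mem ha)

lemma incl_mem {r : ℕ} {a : A d l} (ha : a ∈ Gens d l ^ r) : incl a ∈ Gens d (l + 1) ^ r := by
  have h := Submodule.map_pow (Gens d l) (incl (d := d) (l := l)) r
  have h2 : (Gens d l ^ r).map incl.toLinearMap ≤ Gens d (l + 1) ^ r := by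
    rw [h]
    exact pow_le_pow_left' (map_Gens_le _ _ fun i j => by
      rw [incl_om]; exact om_mem _ _) r
  exact h2 (Submodule.mem_map_of_mem ha)

lemma om_mul_mem (i j : Fin l) {r : ℕ} {a : A d l} (ha : a ∈ Gens d l ^ r) :
    om d l i j * a ∈ Gens d l ^ (r + 1) := by
  rw [pow_succ']
  exact Submodule.mul_mem_mul (om_mem i j) ha

instance (r : ℕ) : Module.Finite ℝ ↥(Gens d l ^ r) :=
  Module.Finite.iff_fg.mpr (Submodule.FG.pow (Submodule.fg_span (Set.finite_range _)) r)

variable (d l) in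
/-- The span of the words of length `r - 1`; there are none for `r = 0`. -/
noncomputable def Xpred : ℕ → Submodule ℝ (A d l)
  | 0 => ⊥
  | r + 1 => Gens d l ^ r

lemma om_mul_mem_Xpred (i j : Fin l) {r : ℕ} {a : A d l} (ha : a ∈ Xpred d l r) :
    om d l i j * a ∈ Gens d l ^ r := by
  cases r with
  | zero => rw [(Submodule.mem_bot ℝ).mp ha, mul_zero]; exact zero_mem _
  | succ r => exact om_mul_mem i j ha

variable (d l) in
/-- The part of `W` of word length `r`, each `e_k` counting as one letter. -/
noncomputable def S (r : ℕ) : Submodule ℝ (W d l) :=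
  Submodule.prod (Gens d l ^ r) (Submodule.pi Set.univ fun _ => Xpred d l r)

lemma mem_S {r : ℕ} {w : W d l} : w ∈ S d l r ↔ w.1 ∈ Gens d l ^ r ∧ ∀ k, w.2 k ∈ Xpred d l r := by
  simp [S, Submodule.mem_prod, Submodule.mem_pi]

lemma u_mem {r : ℕ} {a : A d l} (ha : a ∈ Gens d l ^ r) : u a ∈ S d l r :=
  mem_S.mpr ⟨ha, fun _ => zero_mem _⟩

lemma v_mem {r : ℕ} (k : Fin l) {b : A d l} (hb : b ∈ Xpred d l r) : v k b ∈ S d l r := by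
  refine mem_S.mpr ⟨zero_mem _, fun m => ?_⟩
  by_cases h : m = k
  · subst h; simpa [v] using hb
  · simp [v, h]

lemma L_mem (i j : Fin l) {r : ℕ} {w : W d l} (hw : w ∈ S d l r) :
    L (om d l i j) w ∈ S d l (r + 1) := by
  obtain ⟨h1, h2⟩ := mem_S.mp hw
  exact mem_S.mpr ⟨om_mul_mem i j h1, fun k => om_mul_mem_Xpred i j (h2 k)⟩

lemma E_mem (i : Fin l) {r : ℕ} {w : W d l} (hw : w ∈ S d l r) : E i w ∈ S d l (r + 1) := by
  obtain ⟨h1, h2⟩ := mem_S.mp hw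
  rw [E, elim_apply]
  refine add_mem (v_mem i (par_mem h1)) (sum_mem fun k _ => ?_)
  have := om_mul_mem_Xpred i k (h2 k)
  exact sub_mem (v_mem (r := r + 1) k this) (v_mem (r := r + 1) i this)

/-- The map `φ` matches word lengths. The inclusion `≥` holds since left multiplication by a
generator lifts through `φ` to an operator on `W` raising the length by one. -/
lemma map_S (r : ℕ) : (S d l r).map φ = Gens d (l + 1) ^ r := by
  apply le_antisymm
  · rw [Submodule.map_le_iff_le_comap]
    intro w hw
    obtain ⟨h1, h2⟩ := mem_S.mp hw
    rw [Submodule.mem_comap, φ, elim_apply]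
    refine add_mem (incl_mem h1) (sum_mem fun k _ => ?_)
    specialize h2 k
    cases r with
    | zero =>
      rw [(Submodule.mem_bot ℝ).mp h2, map_zero]
      exact zero_mem _
    | succ r =>
      rw [pow_succ]
      exact Submodule.mul_mem_mul (incl_mem h2) (om_mem _ _)
  · induction r with
    | zero =>
      rw [pow_zero, Submodule.one_le]
      exact ⟨u 1, u_mem (by rw [pow_zero]; exact Submodule.one_le.mp le_rfl), by simp⟩
    | succ r ih =>
      rw [pow_succ', Submodule.mul_le]
      intro x hx y hy
      obtain ⟨w, hw, rfl⟩ := ih hy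
      induction hx using Submodule.span_induction with
      | zero => rw [zero_mul]; exact zero_mem _
      | add a b _ _ ha hb => rw [add_mul]; exact add_mem ha hb
      | smul c a _ ha => rw [smul_mul_assoc]; exact Submodule.smul_mem _ _ ha
      | mem x hx =>
        obtain ⟨⟨i, j⟩, rfl⟩ := hx
        dsimp only
        induction i using Fin.lastCases with
        | last =>
          induction j using Fin.lastCases with
          | last => rw [om_self, zero_mul]; exact zero_mem _
          | cast j =>
            rw [om_sym, neg_mul, smul_mul_assoc]
            exact neg_mem (Submodule.smul_mem _ _ ⟨_, E_mem j hw, φ_E j w⟩)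
        | cast i =>
          induction j using Fin.lastCases with
          | last => exact ⟨_, E_mem i hw, φ_E i w⟩
          | cast j => exact ⟨_, L_mem i j hw, by rw [φ_L, incl_om]⟩

/-- The coefficient recursion of `∏ (1 + i t)`. -/
lemma finrank_succ_succ (r : ℕ) : Module.finrank ℝ ↥(Gens d (l + 1) ^ (r + 1)) =
    Module.finrank ℝ ↥(Gens d l ^ (r + 1)) + l * Module.finrank ℝ ↥(Gens d l ^ r) := by
  let j : (↥(Gens d l ^ (r + 1)) × (Fin l → ↥(Gens d l ^ r))) →ₗ[ℝ] W d l :=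
    LinearMap.prodMap (Submodule.subtype _)
      (LinearMap.pi fun k => Submodule.subtype _ ∘ₗ LinearMap.proj k)
  have hj : Function.Injective j := by
    intro a b hab
    have h1 := congrArg Prod.fst hab
    have h2 := congrArg Prod.snd hab
    exact Prod.ext (Subtype.ext h1) (funext fun k => Subtype.ext (congrFun h2 k))
  have hr : LinearMap.range j = S d l (r + 1) := by
    ext w
    rw [mem_S]
    constructor
    · rintro ⟨a, rfl⟩
      exact ⟨a.1.2, fun k => (a.2 k).2⟩
    · rintro ⟨h1, h2⟩
      exact ⟨(⟨w.1, h1⟩, fun k => ⟨w.2 k, h2 k⟩), rfl⟩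
  rw [← map_S, ← hr, ← LinearMap.range_comp, LinearMap.finrank_range_of_inj (f := φ ∘ₗ j) (by
    rw [LinearMap.coe_comp]; exact φ_injective.comp hj),
    Module.finrank_prod, Module.finrank_pi_fintype]
  simp

/-- The augmentation, sending all generators to `0`, shows that the algebra is nonzero. -/
lemma finrank_zero (d l : ℕ) : Module.finrank ℝ ↥(Gens d l ^ 0) = 1 := by
  have : Nontrivial (A d l) :=
    (lift (d := d) (fun _ _ => (0 : ℝ)) (by constructor <;> simp)).toRingHom.domain_nontrivial
  rw [pow_zero, Submodule.one_eq_span]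
  exact finrank_span_singleton one_ne_zero

lemma Gens_zero (d : ℕ) : Gens d 0 = ⊥ := by
  simp [Gens]

lemma finrank_pow (d l r : ℕ) : Module.finrank ℝ ↥(Gens d l ^ r) =
    (∏ i ∈ Finset.range l, (1 + (i : ℕ[X]) * Polynomial.X)).coeff r := by
  induction l generalizing r with
  | zero =>
    cases r with
    | zero => rw [finrank_zero]; simp
    | succ r => rw [Gens_zero, pow_succ, Submodule.mul_bot]; simp [Polynomial.coeff_one]
  | succ l ih =>
    rw [Finset.prod_range_succ, mul_add, mul_one, ← mul_assoc, mul_comm _ (l : ℕ[X]), mul_assoc]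
    cases r with
    | zero => rw [finrank_zero, Polynomial.coeff_add, ← ih, finrank_zero]; simp
    | succ r =>
      rw [finrank_succ_succ, ih, ih, Polynomial.coeff_add, ← Polynomial.C_eq_natCast,
        Polynomial.coeff_C_mul, Polynomial.coeff_mul_X]
      simp

lemma list_prod_mem (w : List (ArnoldGen l)) : (w.map (gen d l)).prod ∈ Gens d l ^ w.length := by
  induction w with
  | nil => exact Submodule.one_le.mp le_rfl
  | cons p w ih =>
    rw [List.map_cons, List.prod_cons, List.length_cons, gen_eq_om]
    exact om_mul_mem _ _ ih

lemma map_arnoldGraded (hd : d ≠ 0) (r : ℕ) :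
    (arnoldGraded (d + 1) l (d * r)).map (toA d l).toLinearMap = Gens d l ^ r := by
  have hA : ∀ w : List (ArnoldGen l), toA d l (w.map (fun p =>
      RingQuot.mkAlgHom ℝ (ArnoldRel (d + 1) l) (FreeAlgebra.ι ℝ p))).prod =
      (w.map (gen d l)).prod := by
    intro w
    rw [map_list_prod, List.map_map]
    rfl
  apply le_antisymm
  · rw [arnoldGraded, Submodule.map_span_le]
    rintro _ ⟨w, hw, rfl⟩
    have : w.length = r := by
      rw [Nat.add_sub_cancel, mul_comm] at hw
      exact Nat.eq_of_mul_eq_mul_left (Nat.pos_of_ne_zero hd) hw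
    subst this
    exact (hA w).symm ▸ list_prod_mem w
  · have key : Gens d l ^ r ≤ Submodule.span ℝ
        {x | ∃ w : List (ArnoldGen l), w.length = r ∧ x = (w.map (gen d l)).prod} := by
      induction r with
      | zero =>
        rw [pow_zero, Submodule.one_le]
        exact Submodule.subset_span ⟨[], rfl, rfl⟩
      | succ r ih =>
        rw [pow_succ']
        refine (mul_le_mul_right ih _).trans ?_
        rw [Gens, Submodule.span_mul_span, Submodule.span_le]
        rintro _ ⟨_, ⟨⟨i, j⟩, rfl⟩, _, ⟨w, hw, rfl⟩, rfl⟩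
        by_cases h : i = j
        · subst h
          simp only [om_self, zero_mul]
          exact zero_mem _
        · exact Submodule.subset_span ⟨⟨(i, j), h⟩ :: w, by simp [hw], by simp [om_of_ne h]⟩
    refine key.trans (Submodule.span_le.mpr ?_)
    rintro _ ⟨w, rfl, rfl⟩
    exact ⟨_, Submodule.subset_span ⟨w, mul_comm _ _, rfl⟩, hA w⟩

lemma arnoldGraded_eq_bot {k : ℕ} (h : ¬ d ∣ k) : arnoldGraded (d + 1) l k = ⊥ := by
  rw [arnoldGraded, Submodule.span_eq_bot]
  rintro _ ⟨w, hw, -⟩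
  exact absurd ⟨w.length, by rw [← hw, Nat.add_sub_cancel, mul_comm]⟩ h

end Grading

end Arnold

/-- For `n ≥ 2`, the Poincaré polynomial of the Arnold algebra
`e_n^∨(l)` equals `∏_{i=0}^{l-1} (1 + i·t^{n-1})`: the dimension of each graded
piece is the corresponding coefficient of the product. -/
theorem arnold_poincare_polynomial (n l : ℕ) (hn : 2 ≤ n) (k : ℕ) :
    Module.finrank ℝ (arnoldGraded n l k) =
      ((∏ i ∈ Finset.range l,
        (1 + (i : Polynomial ℕ) * X ^ (n - 1)) : Polynomial ℕ)).coeff k := by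
  obtain ⟨d, rfl⟩ : ∃ d, n = d + 1 := ⟨n - 1, by omega⟩
  have hd : d ≠ 0 := by omega
  have hexp : (∏ i ∈ Finset.range l, (1 + (i : Polynomial ℕ) * X ^ (d + 1 - 1)) : Polynomial ℕ) =
      Polynomial.expand ℕ d (∏ i ∈ Finset.range l, (1 + (i : Polynomial ℕ) * X)) := by
    simp
  rw [hexp, Polynomial.coeff_expand (Nat.pos_of_ne_zero hd)]
  split_ifs with h
  · obtain ⟨r, rfl⟩ := h
    rw [Nat.mul_div_cancel_left r (Nat.pos_of_ne_zero hd), ← Arnold.finrank_pow d l r,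
      ← Arnold.map_arnoldGraded hd r]
    exact ((Arnold.toA d l).toLinearEquiv.finrank_map_eq _).symm
  · rw [Arnold.arnoldGraded_eq_bot h, finrank_bot]
end
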